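/- Under the stated assumptions, for every integer k ≥ 0, the k-th normalized central moment E((Y_N − μ log N)/(σ √(log N)))^k = (1/A(N)) Σ_{1≤n≤N} Σ_{m≥0} a_m(n) ((m − μ log N)/(σ √(log N)))^k converges, as N → ∞, to k!/((k/2)! 2^{k/2}) if k is even and to 0 if k is odd. -/

import Mathlib

open scoped BigOperators ENNReal
open Filter Asymptotics

noncomputable section

/-- `af P m n` is the number of ordered `m`-tuples `(n₁,…,n_m)` of elements of `P`
with product `n` (so `af P 0 n = 1` iff `n = 1`). -/
def af (P : Set ℕ) (m n : ℕ) : ℕ :=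
  Nat.card {t : Fin m → ℕ // (∀ i, t i ∈ P) ∧ ∏ i, t i = n}

/-- `aTot P n = a(n) = Σ_{m ≥ 0} a_m(n)`. -/
def aTot (P : Set ℕ) (n : ℕ) : ℝ := ∑' m : ℕ, (af P m n : ℝ)

/-- `Acum P N = A(N) = Σ_{1 ≤ n ≤ N} a(n)`. -/
def Acum (P : Set ℕ) (N : ℕ) : ℝ := ∑ n ∈ Finset.Icc 1 N, aTot P n

/-- The Dirichlet series `𝒫(x) = Σ_{n ∈ 𝒫} n^{-x}` at a real point. -/
def Pval (P : Set ℕ) (x : ℝ) : ℝ := ∑' n : P, ((n : ℕ) : ℝ) ^ (-x)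

/-- `𝒫'(x) = -Σ_{n ∈ 𝒫} n^{-x} log n`. -/
def Pderiv1 (P : Set ℕ) (x : ℝ) : ℝ := -∑' n : P, ((n : ℕ) : ℝ) ^ (-x) * Real.log (n : ℕ)

/-- `𝒫''(x) = Σ_{n ∈ 𝒫} n^{-x} (log n)^2`. -/
def Pderiv2 (P : Set ℕ) (x : ℝ) : ℝ := ∑' n : P, ((n : ℕ) : ℝ) ^ (-x) * (Real.log (n : ℕ)) ^ 2

/-- The abscissa of convergence `κ` of the Dirichlet series of `P`, as an extended real
(`⊥` when `P` is finite). -/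
def kappa (P : Set ℕ) : EReal :=
  sInf {x : EReal | ∃ r : ℝ, x = (r : EReal) ∧ Summable (fun n : P => ((n : ℕ) : ℝ) ^ (-r))}

open Classical in
/-- The (possibly infinite) value `𝒫(x) ∈ (0,∞]` of the Dirichlet series at an
extended-real point; at `x = -∞` every term `n^{-x}` is infinite. -/
def PvalE (P : Set ℕ) (x : EReal) : ℝ≥0∞ :=
  if x = ⊥ then ⊤ else ∑' n : P, ENNReal.ofReal (((n : ℕ) : ℝ) ^ (-x.toReal))


theorem exp_rem (y : ℝ) (n : ℕ) :
    |Real.exp y - ∑ i ∈ Finset.range n, y ^ i / (i.factorial : ℝ)| ≤ |y| ^ n * Real.exp |y| := by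
  have := Complex.norm_exp_sub_sum_le_norm_mul_exp (y : ℂ) n
  have e : Complex.exp (y:ℂ) - ∑ m ∈ Finset.range n, (y:ℂ) ^ m / (m.factorial : ℂ) =
     ((Real.exp y - ∑ i ∈ Finset.range n, y ^ i / (i.factorial : ℝ) : ℝ) : ℂ) := by
    push_cast; rfl
  rw [e, Complex.norm_real, Complex.norm_real] at this
  simpa only [Real.norm_eq_abs] using this

theorem gauss_deriv (n : ℕ) : iteratedDeriv (n+2) (fun t : ℝ => Real.exp (t^2/2)) =
    fun t => t * iteratedDeriv (n+1) (fun t : ℝ => Real.exp (t^2/2)) t +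
      (n+1) * iteratedDeriv n (fun t : ℝ => Real.exp (t^2/2)) t := by
  set g : ℝ → ℝ := fun t : ℝ => Real.exp (t^2/2) with hg
  have hsm : ∀ n : ℕ, ContDiff ℝ ((n+1 : ℕ)) g := by intro n; rw [hg]; fun_prop
  have hd : ∀ n, Differentiable ℝ (iteratedDeriv n g) := fun n =>
    (hsm n).differentiable_iteratedDeriv n (by exact_mod_cast Nat.lt_succ_self n)
  have h1 : iteratedDeriv 1 g = fun t => t * g t := by
    ext t
    rw [iteratedDeriv_one]
    have : HasDerivAt g (Real.exp (t^2/2) * (2 * t / 2)) t := by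
      have := (((hasDerivAt_id t).pow 2).div_const 2).exp
      simpa using this
    rw [this.deriv, hg]; ring
  have key : ∀ n, deriv (fun t : ℝ => t * iteratedDeriv n g t) =
      fun t => iteratedDeriv n g t + t * iteratedDeriv (n+1) g t := by
    intro n; ext t
    have := ((hasDerivAt_id t).mul ((hd n) t).hasDerivAt)
    simp only [id, one_mul] at this
    rw [iteratedDeriv_succ]
    exact this.deriv
  induction n with
  | zero =>
    rw [iteratedDeriv_succ, h1]
    have := key 0
    simp only [iteratedDeriv_zero, zero_add, h1] at this ⊢
    rw [this]; ext t; push_cast; ring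
  | succ n ih =>
    rw [iteratedDeriv_succ]
    conv_lhs => rw [ih]
    ext t
    have a := ((hasDerivAt_id t).mul ((hd (n+1)) t).hasDerivAt)
    have b := (((hd n) t).hasDerivAt).const_mul ((n:ℝ)+1)
    have := (a.add b).deriv
    simp only [id, one_mul, ← iteratedDeriv_succ] at this
    refine Eq.trans ?_ (this.trans ?_)
    · rfl
    · push_cast; ring

theorem gauss_mom (k : ℕ) : iteratedDeriv k (fun t : ℝ => Real.exp (t^2/2)) 0 =
    (if Even k then (Nat.factorial k : ℝ) / (Nat.factorial (k / 2) * 2 ^ (k / 2)) else 0) := by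
  induction k using Nat.twoStepInduction with
  | zero => simp
  | one =>
    rw [iteratedDeriv_one]
    have : HasDerivAt (fun t : ℝ => Real.exp (t^2/2)) (Real.exp ((0:ℝ)^2/2) * (2 * 0 / 2)) 0 := by
      have := (((hasDerivAt_id (0:ℝ)).pow 2).div_const 2).exp
      simpa using this
    rw [this.deriv]; simp
  | more n ih _ =>
    rw [gauss_deriv]
    simp only [zero_mul, zero_add, ih]
    by_cases h : Even n
    · have h2 : Even (n+2) := by rw [Nat.even_add]; simp [h]
      simp only [h, h2, if_true]
      obtain ⟨m, rfl⟩ := h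
      have e1 : (m + m)/2 = m := by omega
      have e2 : (m + m + 2)/2 = m+1 := by omega
      rw [e1, e2, Nat.factorial_succ (m+m+1), Nat.factorial_succ (m+m), Nat.factorial_succ m]
      have := Nat.factorial_pos m
      push_cast
      field_simp
      ring
    · have h2 : ¬ Even (n+2) := by rw [Nat.even_add]; simp [h]
      simp [h, h2]

theorem diffpow_bound (k : ℕ) (h x : ℝ) (h0 : 0 < h) (h1 : h ≤ 1) :
    |((Real.exp (h*x) - 1)/h)^k - x^k| ≤
      h * (k * (k+1).factorial) * (Real.exp ((k+1)*x) + Real.exp (-(k+1)*x)) := by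
  rcases Nat.eq_zero_or_pos k with rfl | hk
  · simp
  set q := (Real.exp (h*x) - 1)/h with hq
  have E1 : Real.exp (|h*x|) ≤ Real.exp |x| := by
    apply Real.exp_le_exp.2
    rw [abs_mul, abs_of_pos h0]
    nlinarith [abs_nonneg x]
  have b1 : |q| ≤ |x| * Real.exp |x| := by
    have := exp_rem (h*x) 1
    simp only [Finset.range_one, Finset.sum_singleton, pow_zero, Nat.factorial_zero, Nat.cast_one, div_one, pow_one] at this
    rw [hq, abs_div, abs_of_pos h0, div_le_iff₀ h0]
    rw [abs_mul h x, abs_of_pos h0] at this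
    rw [abs_mul h x, abs_of_pos h0] at E1
    calc _ ≤ _ := this
      _ ≤ h * |x| * Real.exp |x| := by gcongr
      _ = _ := by ring
  have b2 : |q - x| ≤ h * |x|^2 * Real.exp |x| := by
    have := exp_rem (h*x) 2
    simp [Finset.sum_range_succ] at this
    have e : q - x = (Real.exp (h*x) - (1 + h*x))/h := by rw [hq]; field_simp; ring
    rw [e, abs_div, abs_of_pos h0, div_le_iff₀ h0]
    calc _ ≤ _ := this
      _ ≤ (h*|x|)^2 * Real.exp |x| := by
        rw [abs_mul h x, abs_of_pos h0] at E1
        rw [abs_of_pos h0]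
        gcongr
      _ = _ := by ring
  have b3 : |x| ≤ |x| * Real.exp |x| := by
    have := Real.one_le_exp (abs_nonneg x)
    nlinarith [abs_nonneg x]
  have b4 := abs_pow_sub_pow_le q x k
  have b5 : |x|^(k+1) ≤ (k+1).factorial * Real.exp |x| := by
    have := Real.pow_div_factorial_le_exp _ (abs_nonneg x) (k+1)
    rwa [div_le_iff₀ (by positivity), mul_comm] at this
  calc _ ≤ _ := b4
    _ ≤ (h * |x|^2 * Real.exp |x|) * k * (|x| * Real.exp |x|)^(k-1) := by
      gcongr
      exact max_le b1 b3
    _ = h * k * |x|^(k+1) * Real.exp |x| ^ k := by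
      obtain ⟨j, rfl⟩ : ∃ j, k = j+1 := ⟨k-1, by omega⟩
      simp only [Nat.add_sub_cancel]; ring
    _ ≤ h * k * ((k+1).factorial * Real.exp |x|) * Real.exp |x| ^ k := by gcongr
    _ = h * (k * (k+1).factorial) * Real.exp ((k+1)*|x|) := by
      rw [add_mul, Real.exp_add, one_mul, Real.exp_nat_mul]; ring
    _ ≤ _ := by
      gcongr
      rcases abs_cases x with ⟨h, _⟩ | ⟨h, _⟩ <;> rw [h]
      · linarith [Real.exp_pos (-(k+1)*x)]
      · have : ((k:ℝ)+1)*(-x) = -(k+1)*x := by ring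
        rw [this]
        linarith [Real.exp_pos ((k+1)*x)]

theorem diffpow_expand (k : ℕ) (h x : ℝ) :
    ((Real.exp (h*x) - 1)/h)^k =
      ∑ j ∈ Finset.range (k+1), ((-1)^(k-j) * (k.choose j : ℝ) / h^k) * Real.exp ((j*h)*x) := by
  rw [div_pow, sub_eq_add_neg, add_pow, Finset.sum_div]
  refine Finset.sum_congr rfl fun j _ => ?_
  rw [mul_assoc (j:ℝ) h x, Real.exp_nat_mul]; ring

open MeasureTheory ProbabilityTheory in
theorem moments_of_mgf (w X : ℕ → ℕ → ℝ) (S : ℕ → Finset ℕ)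
    (hw : ∀ N, ∀ m ∈ S N, 0 ≤ w N m) (A : ℕ → ℝ) (hA : ∀ N, 0 ≤ A N)
    (hM : ∀ t : ℝ, Tendsto (fun N => (∑ m ∈ S N, w N m * Real.exp (t * X N m)) / A N) atTop
      (nhds (Real.exp (t^2/2)))) (k : ℕ) :
    Tendsto (fun N => (∑ m ∈ S N, w N m * (X N m)^k) / A N) atTop
      (nhds (if Even k then (Nat.factorial k : ℝ) / (Nat.factorial (k / 2) * 2 ^ (k / 2))
        else 0)) := by
  set γ : Measure ℝ := gaussianReal 0 1 with hγ
  have hI : ∀ t : ℝ, Integrable (fun x => Real.exp (t*x)) γ := fun t =>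
    integrable_exp_mul_gaussianReal t
  have hmg : ∀ t : ℝ, ∫ x, Real.exp (t*x) ∂γ = Real.exp (t^2/2) := by
    intro t
    have := congrFun (mgf_id_gaussianReal (μ := 0) (v := 1)) t
    simpa [mgf] using this
  have hin : (0:ℝ) ∈ interior (integrableExpSet id γ) := by
    rw [hγ, integrableExpSet_id_gaussianReal]; simp
  have hmom : ∫ x, x^k ∂γ = (if Even k then (Nat.factorial k : ℝ) / (Nat.factorial (k / 2) * 2 ^ (k / 2))
        else 0) := by
    rw [← gauss_mom k]
    have := iteratedDeriv_mgf_zero hin k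
    rw [hγ, mgf_id_gaussianReal] at this
    simp only [NNReal.coe_one, zero_mul, one_mul, zero_add] at this
    rw [this]; rfl
  have hIk : Integrable (fun x : ℝ => x^k) γ := 
    integrable_pow_of_mem_interior_integrableExpSet hin k
  rw [← hmom]
  set K : ℝ := (k * (k+1).factorial) with hK
  have hK0 : 0 ≤ K := by positivity
  set B : ℝ := Real.exp (((k:ℝ)+1)^2/2) + Real.exp ((-((k:ℝ)+1))^2/2) with hB
  have hB0 : 0 < B := by positivity
  -- gaussian bound
  have hq : ∀ h : ℝ, Integrable (fun x => ((Real.exp (h*x) - 1)/h)^k) γ := by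
    intro h
    simp_rw [diffpow_expand]
    exact integrable_finsetSum _ fun j _ => (hI _).const_mul _
  have g1 : ∀ h : ℝ, 0 < h → h ≤ 1 →
      |∫ x, ((Real.exp (h*x) - 1)/h)^k ∂γ - ∫ x, x^k ∂γ| ≤ h * K * B := by
    intro h h0 h1
    rw [← integral_sub (hq h) hIk, ← Real.norm_eq_abs]
    refine (norm_integral_le_integral_norm _).trans ?_
    have : h * K * B = ∫ x, h * K * (Real.exp ((k+1)*x) + Real.exp (-(k+1)*x)) ∂γ := by
      rw [integral_const_mul, integral_add (hI _) (hI _), hmg, hmg]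
    rw [this]
    refine integral_mono ((hq h).sub hIk).norm (((hI _).add (hI _)).const_mul _) ?_
    intro x
    simpa [hK] using diffpow_bound k h x h0 h1
  have g2 : ∀ h : ℝ, 0 < h → h ≤ 1 → ∀ N,
      |(∑ m ∈ S N, w N m * ((Real.exp (h*X N m) - 1)/h)^k) / A N -
        (∑ m ∈ S N, w N m * (X N m)^k) / A N| ≤ h * K *
        ((∑ m ∈ S N, w N m * Real.exp ((k+1) * X N m)) / A N +
        (∑ m ∈ S N, w N m * Real.exp (-(k+1) * X N m)) / A N) := by
    intro h h0 h1 N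
    rw [← sub_div, ← add_div, ← Finset.sum_sub_distrib, ← Finset.sum_add_distrib, abs_div,
      abs_of_nonneg (hA N), ← mul_div_assoc]
    refine div_le_div_of_nonneg_right ?_ (hA N)
    refine (Finset.abs_sum_le_sum_abs _ _).trans ?_
    rw [Finset.mul_sum]
    refine Finset.sum_le_sum fun m hm => ?_
    rw [← mul_sub, abs_mul, abs_of_nonneg (hw N m hm)]
    calc _ ≤ w N m * (h * K * (Real.exp ((k+1)*X N m) + Real.exp (-(k+1)*X N m))) :=
        mul_le_mul_of_nonneg_left (diffpow_bound k h _ h0 h1) (hw N m hm)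
      _ = _ := by ring
  have g3 : ∀ h : ℝ, Tendsto (fun N => (∑ m ∈ S N, w N m * ((Real.exp (h*X N m) - 1)/h)^k) / A N)
      atTop (nhds (∫ x, ((Real.exp (h*x) - 1)/h)^k ∂γ)) := by
    intro h
    simp_rw [diffpow_expand]
    rw [integral_finsetSum _ fun j _ => (hI _).const_mul _]
    simp_rw [integral_const_mul, hmg]
    have : ∀ N, (∑ m ∈ S N, w N m * ∑ j ∈ Finset.range (k+1),
        ((-1)^(k-j) * (k.choose j : ℝ) / h^k) * Real.exp ((j*h)*X N m)) / A N =
        ∑ j ∈ Finset.range (k+1), ((-1)^(k-j) * (k.choose j : ℝ) / h^k) *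
          ((∑ m ∈ S N, w N m * Real.exp ((j*h) * X N m)) / A N) := by
      intro N
      simp_rw [Finset.mul_sum]
      rw [Finset.sum_comm, Finset.sum_div]
      refine Finset.sum_congr rfl fun j _ => ?_
      rw [Finset.sum_div, Finset.sum_div, Finset.mul_sum]
      refine Finset.sum_congr rfl fun m _ => ?_
      ring
    simp_rw [this]
    exact tendsto_finsetSum _ fun j _ => (hM _).const_mul _
  rw [Metric.tendsto_atTop]
  intro ε hε
  obtain ⟨h, h0, h1, hh⟩ : ∃ h : ℝ, 0 < h ∧ h ≤ 1 ∧ h * K * (B+1) < ε/3 := by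
    refine ⟨min 1 (ε / (6 * (K+1) * (B+1))), lt_min one_pos (by positivity), min_le_left _ _, ?_⟩
    calc _ ≤ (ε / (6 * (K+1) * (B+1))) * (K+1) * (B+1) := by gcongr; exact min_le_right _ _; linarith
      _ = ε/6 := by field_simp
      _ < _ := by linarith
  have e1 := (Metric.tendsto_atTop.1 (g3 h)) (ε/3) (by positivity)
  have e2 := ((hM ((k:ℝ)+1)).add (hM (-((k:ℝ)+1)))).eventually (gt_mem_nhds (show B < B+1 by linarith))
  obtain ⟨N1, h1'⟩ := e1
  obtain ⟨N2, h2'⟩ := eventually_atTop.1 e2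
  refine ⟨max N1 N2, fun N hN => ?_⟩
  have a1 := h1' N (le_trans (le_max_left _ _) hN)
  have a2 := h2' N (le_trans (le_max_right _ _) hN)
  rw [Real.dist_eq] at a1 ⊢
  have a3 := g2 h h0 h1 N
  have a4 := g1 h h0 h1
  have a5 : h * K * B ≤ h * K * (B+1) := by gcongr; linarith
  have a6 := a3.trans (mul_le_mul_of_nonneg_left a2.le (by positivity))
  rw [abs_lt] at a1 ⊢
  rw [abs_le] at a4 a6
  constructor <;> linarith [a1.1, a1.2, a4.1, a4.2, a6.1, a6.2]


theorem af_zero (P : Set ℕ) (n : ℕ) : af P 0 n = if n = 1 then 1 else 0 := by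
  unfold af
  split_ifs with h
  · subst h
    rw [Nat.card_eq_one_iff_unique]
    exact ⟨⟨fun a b => Subtype.ext (Subsingleton.elim _ _)⟩, ⟨⟨Fin.elim0, by simp⟩⟩⟩
  · have : IsEmpty {t : Fin 0 → ℕ // (∀ i, t i ∈ P) ∧ ∏ i, t i = n} :=
      ⟨fun t => h (by simpa using t.2.2.symm)⟩
    exact Nat.card_of_isEmpty

theorem af_finite (P : Set ℕ) (m n : ℕ) (hn : n ≠ 0) :
    Finite {t : Fin m → ℕ // (∀ i, t i ∈ P) ∧ ∏ i, t i = n} := by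
  have : Set.Finite {t : Fin m → ℕ | ∀ i, t i ∈ Set.Iic n} := Set.Finite.pi' fun i => Set.finite_Iic n
  refine (this.subset ?_).to_subtype
  rintro t ⟨_, h⟩ i
  exact Nat.le_of_dvd (Nat.pos_of_ne_zero hn) (h ▸ Finset.dvd_prod_of_mem t (Finset.mem_univ i))

open Classical in
theorem af_succ (P : Set ℕ) (m k : ℕ) (hk : k ≠ 0) :
    af P (m+1) k = ∑ x ∈ k.divisorsAntidiagonal, (if x.1 ∈ P then 1 else 0) * af P m x.2 := by
  have e : {t : Fin (m+1) → ℕ // (∀ i, t i ∈ P) ∧ ∏ i, t i = k} ≃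
      Σ x : {x // x ∈ k.divisorsAntidiagonal.filter (fun x => x.1 ∈ P)}, 
        {t : Fin m → ℕ // (∀ i, t i ∈ P) ∧ ∏ i, t i = x.1.2} :=
    { toFun := fun t => ⟨⟨(t.1 0, ∏ i : Fin m, t.1 i.succ), by
          have := t.2.2
          rw [Fin.prod_univ_succ] at this
          simp only [Finset.mem_filter, Nat.mem_divisorsAntidiagonal]
          exact ⟨⟨this, hk⟩, t.2.1 0⟩⟩, ⟨fun i => t.1 i.succ, fun i => t.2.1 _, rfl⟩⟩
      invFun := fun y => ⟨Fin.cons y.1.1.1 y.2.1, by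
          have h := y.1.2
          simp only [Finset.mem_filter, Nat.mem_divisorsAntidiagonal] at h
          constructor
          · intro i
            refine Fin.cases ?_ (fun j => ?_) i
            · simpa using h.2
            · simpa using y.2.2.1 j
          · rw [Fin.prod_univ_succ]
            simp only [Fin.cons_zero, Fin.cons_succ]
            rw [y.2.2.2]; exact h.1.1⟩
      left_inv := by
        rintro ⟨t, ht⟩
        apply Subtype.ext
        funext i
        refine Fin.cases ?_ (fun j => ?_) i <;> simp
      right_inv := by
        rintro ⟨⟨⟨a, b⟩, hab⟩, ⟨t, ht⟩⟩
        have hb : b = ∏ i, t i := ht.2.symm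
        subst hb
        rfl }
  have hf : ∀ x : {x // x ∈ k.divisorsAntidiagonal.filter (fun x => x.1 ∈ P)},
      Finite {t : Fin m → ℕ // (∀ i, t i ∈ P) ∧ ∏ i, t i = x.1.2} := by
    intro x
    apply af_finite
    have h := x.2
    simp only [Finset.mem_filter, Nat.mem_divisorsAntidiagonal] at h
    intro h0
    rw [h0] at h; simp at h; exact hk h.1.1.symm
  unfold af
  rw [Nat.card_congr e, Nat.card_sigma]
  rw [Finset.sum_coe_sort (k.divisorsAntidiagonal.filter (fun x => x.1 ∈ P))
    (fun x => Nat.card {t : Fin m → ℕ // (∀ i, t i ∈ P) ∧ ∏ i, t i = x.2})]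
  rw [Finset.sum_filter]
  refine Finset.sum_congr rfl fun x _ => ?_
  split_ifs <;> simp

def cnt (P : Set ℕ) (m N : ℕ) : ℝ := ∑ k ∈ Finset.Icc 1 N, (af P m k : ℝ)

def Fz (P : Set ℕ) (z : ℝ) (N : ℕ) : ℝ := ∑ m ∈ Finset.range (N+1), cnt P m N * z ^ m

open Classical in
def EN (P : Set ℕ) (N : ℕ) : Finset ℕ := (Finset.Icc 1 N).filter (fun n => n ∈ P)

theorem af_eq_zero (P : Set ℕ) (hP : ∀ n ∈ P, 2 ≤ n) (m n : ℕ) (h : n < 2^m) : af P m n = 0 := by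
  unfold af
  have : IsEmpty {t : Fin m → ℕ // (∀ i, t i ∈ P) ∧ ∏ i, t i = n} := by
    refine ⟨fun t => ?_⟩
    have h1 : ∏ i : Fin m, 2 ≤ ∏ i, t.1 i := Finset.prod_le_prod' fun i _ => hP _ (t.2.1 i)
    rw [t.2.2] at h1
    simp at h1
    omega
  simp

theorem cnt_eq_zero (P : Set ℕ) (hP : ∀ n ∈ P, 2 ≤ n) (m N : ℕ) (h : N ≤ m) : cnt P m N = 0 := by
  unfold cnt
  refine Finset.sum_eq_zero fun k hk => ?_
  rw [af_eq_zero P hP m k]; · simp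
  have := (Finset.mem_Icc.1 hk).2
  have := Nat.lt_two_pow_self (n := m)
  omega

theorem cnt_zero (P : Set ℕ) (N : ℕ) (h : 1 ≤ N) : cnt P 0 N = 1 := by
  unfold cnt
  rw [Finset.sum_eq_single 1]
  · simp [af_zero]
  · intro b _ hb; simp [af_zero, hb]
  · intro h'; exact absurd (Finset.mem_Icc.2 ⟨le_rfl, h⟩) h'

theorem cnt_nonneg (P : Set ℕ) (m N : ℕ) : 0 ≤ cnt P m N := 
  Finset.sum_nonneg fun _ _ => Nat.cast_nonneg _

theorem cnt_mono (P : Set ℕ) (m : ℕ) {N M : ℕ} (h : N ≤ M) : cnt P m N ≤ cnt P m M := 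
  Finset.sum_le_sum_of_subset_of_nonneg (Finset.Icc_subset_Icc_right h) fun _ _ _ => Nat.cast_nonneg _

theorem cnt_succ (P : Set ℕ) (m N : ℕ) : cnt P (m+1) N = ∑ n ∈ EN P N, cnt P m (N / n) := by
  classical
  let p : ArithmeticFunction ℝ := ⟨fun n => if n = 0 then 0 else if n ∈ P then 1 else 0, by simp⟩
  let a : ArithmeticFunction ℝ := ⟨fun n => if n = 0 then 0 else (af P m n : ℝ), by simp⟩
  have := ArithmeticFunction.sum_Ioc_mul_eq_sum_sum p a N
  have e : ∀ n, Finset.Ioc 0 n = Finset.Icc 1 n := by intro n; ext; simp; omega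
  simp only [e] at this
  unfold cnt EN
  rw [Finset.sum_filter]
  have l : ∑ k ∈ Finset.Icc 1 N, (af P (m+1) k : ℝ) = ∑ n ∈ Finset.Icc 1 N, (p * a) n := by
    refine Finset.sum_congr rfl fun k hk => ?_
    have hk0 : k ≠ 0 := by have := (Finset.mem_Icc.1 hk).1; omega
    rw [af_succ P m k hk0, ArithmeticFunction.mul_apply]
    push_cast
    refine Finset.sum_congr rfl fun x hx => ?_
    have h1 := Nat.mem_divisorsAntidiagonal.1 hx
    have hx1 : x.1 ≠ 0 := by rintro h; rw [h] at h1; simp at h1; omega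
    have hx2 : x.2 ≠ 0 := by rintro h; rw [h] at h1; simp at h1; omega
    simp [p, a, hx1, hx2]
  rw [l, this]
  refine Finset.sum_congr rfl fun k hk => ?_
  have hk0 : k ≠ 0 := by have := (Finset.mem_Icc.1 hk).1; omega
  have : ∑ j ∈ Finset.Icc 1 (N/k), a j = ∑ j ∈ Finset.Icc 1 (N/k), (af P m j : ℝ) := by
    refine Finset.sum_congr rfl fun j hj => ?_
    have hj0 : j ≠ 0 := by have := (Finset.mem_Icc.1 hj).1; omega
    simp [a, hj0]
  rw [this]
  simp [p, hk0]

theorem Fz_eq (P : Set ℕ) (hP : ∀ n ∈ P, 2 ≤ n) (z : ℝ) (N R : ℕ) (h : N ≤ R) :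
    Fz P z N = ∑ m ∈ Finset.range R, cnt P m N * z ^ m := by
  unfold Fz
  have a : ∀ R, N ≤ R → ∑ m ∈ Finset.range R, cnt P m N * z ^ m =
      ∑ m ∈ Finset.range N, cnt P m N * z ^ m := by
    intro R h
    symm
    apply Finset.sum_subset (Finset.range_subset_range.2 h)
    intro m _ hm
    rw [cnt_eq_zero P hP m N (by simpa using hm), zero_mul]
  rw [a _ h, a _ (Nat.le_succ N)]

theorem Fz_zero (P : Set ℕ) (z : ℝ) : Fz P z 0 = 0 := by
  simp [Fz, cnt]

theorem Fz_rec (P : Set ℕ) (hP : ∀ n ∈ P, 2 ≤ n) (z : ℝ) (N : ℕ) (hN : 1 ≤ N) :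
    Fz P z N = 1 + z * ∑ n ∈ EN P N, Fz P z (N / n) := by
  have : ∀ n ∈ EN P N, Fz P z (N/n) = ∑ m ∈ Finset.range N, cnt P m (N/n) * z ^ m := by
    intro n _
    exact Fz_eq P hP z _ _ (Nat.div_le_self N n)
  rw [Finset.sum_congr rfl this, Fz, Finset.sum_range_succ', cnt_zero P N hN]
  rw [Finset.sum_comm, Finset.mul_sum, add_comm]
  congr 1
  · simp
  · refine Finset.sum_congr rfl fun m _ => ?_
    rw [cnt_succ, Finset.sum_mul, Finset.mul_sum]
    refine Finset.sum_congr rfl fun n _ => ?_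
    ring

theorem Fz_mono (P : Set ℕ) (hP : ∀ n ∈ P, 2 ≤ n) (z : ℝ) (hz : 0 ≤ z) : Monotone (Fz P z) := by
  intro N M h
  rw [Fz_eq P hP z N M h, Fz_eq P hP z M M le_rfl]
  refine Finset.sum_le_sum fun m _ => ?_
  have := cnt_mono P m h
  gcongr

theorem Fz_nonneg (P : Set ℕ) (z : ℝ) (hz : 0 ≤ z) (N : ℕ) : 0 ≤ Fz P z N :=
  Finset.sum_nonneg fun m _ => mul_nonneg (cnt_nonneg P m N) (by positivity)

theorem Fz_pos (P : Set ℕ) (z : ℝ) (hz : 0 ≤ z) (N : ℕ) (hN : 1 ≤ N) : 0 < Fz P z N := by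
  unfold Fz
  rw [Finset.sum_range_succ', cnt_zero P N hN]
  have : 0 ≤ ∑ k ∈ Finset.range N, cnt P (k + 1) N * z ^ (k + 1) :=
    Finset.sum_nonneg fun m _ => mul_nonneg (cnt_nonneg P _ N) (by positivity)
  simp; linarith


def ff (P : Set ℕ) (s x : ℝ) : ℝ := Real.exp (-s*x) * Fz P (Pval P s)⁻¹ ⌊Real.exp x⌋₊

def pw (P : Set ℕ) (s : ℝ) (n : ℕ) : ℝ := (n:ℝ)^(-s) / Pval P s

def wt (s x : ℝ) : ℝ := if 0 ≤ x then Real.exp (-s*x) else 0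

theorem mem_EN (P : Set ℕ) (N n : ℕ) : n ∈ EN P N ↔ (1 ≤ n ∧ n ≤ N) ∧ n ∈ P := by
  unfold EN; simp

theorem tsum_EN (P : Set ℕ) (hP : ∀ n ∈ P, 2 ≤ n) (g : ℕ → ℝ) (N : ℕ)
    (hg : ∀ n ∈ P, N < n → g n = 0) :
    HasSum (fun n : P => g n) (∑ n ∈ EN P N, g n) := by
  have : HasSum (Set.indicator P g) (∑ n ∈ EN P N, Set.indicator P g n) := by
    apply hasSum_sum_of_ne_finset_zero
    intro b hb
    by_cases h : b ∈ P
    · rw [Set.indicator_of_mem h]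
      refine hg b h ?_
      by_contra h2
      exact hb ((mem_EN P N b).2 ⟨⟨by have := hP b h; omega, by omega⟩, h⟩)
    · simp [h]
  have e : ∑ n ∈ EN P N, Set.indicator P g n = ∑ n ∈ EN P N, g n := by
    refine Finset.sum_congr rfl fun n hn => ?_
    rw [Set.indicator_of_mem ((mem_EN P N n).1 hn).2]
  rw [e] at this
  exact (hasSum_subtype_iff_indicator (f := g) (s := P)).2 this

theorem Pval_pos (P : Set ℕ) (hP : ∀ n ∈ P, 2 ≤ n) (hne : P.Nonempty) (s : ℝ)
    (hs : Summable (fun n : P => ((n : ℕ) : ℝ) ^ (-s))) : 0 < Pval P s := by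
  obtain ⟨n, hn⟩ := hne
  refine hs.tsum_pos (fun i => by positivity) ⟨n, hn⟩ ?_
  have := hP n hn
  have : (0:ℝ) < n := by exact_mod_cast (by omega : 0 < n)
  positivity

theorem pw_nonneg (P : Set ℕ) (s : ℝ) (n : ℕ) : 0 ≤ pw P s n := by
  unfold pw Pval
  have : 0 ≤ ∑' n : P, ((n : ℕ) : ℝ) ^ (-s) := tsum_nonneg fun i => by positivity
  positivity

theorem pw_hasSum (P : Set ℕ) (hP : ∀ n ∈ P, 2 ≤ n) (hne : P.Nonempty) (s : ℝ)
    (hs : Summable (fun n : P => ((n : ℕ) : ℝ) ^ (-s))) : HasSum (fun n : P => pw P s n) 1 := by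
  have := hs.hasSum.div_const (Pval P s)
  rwa [show ∑' n : P, ((n : ℕ) : ℝ) ^ (-s) = Pval P s from rfl,
    div_self (Pval_pos P hP hne s hs).ne'] at this

theorem ff_neg (P : Set ℕ) (s x : ℝ) (hx : x < 0) : ff P s x = 0 := by
  unfold ff
  rw [Nat.floor_eq_zero.2 (by simpa using hx), Fz_zero, mul_zero]

theorem Pinv_nonneg (P : Set ℕ) (s : ℝ) : 0 ≤ (Pval P s)⁻¹ := 
  inv_nonneg.2 (tsum_nonneg fun i => by positivity)

theorem ff_nonneg (P : Set ℕ) (s x : ℝ) : 0 ≤ ff P s x :=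
  mul_nonneg (Real.exp_pos _).le (Fz_nonneg P _ (Pinv_nonneg P s) _)

theorem ff_mono (P : Set ℕ) (hP : ∀ n ∈ P, 2 ≤ n) (s x y : ℝ) (h : x ≤ y) :
    ff P s x ≤ Real.exp (s * (y - x)) * ff P s y := by
  unfold ff
  rw [← mul_assoc, ← Real.exp_add]
  have : s * (y-x) + -s*y = -s*x := by ring
  rw [this]
  have := Fz_mono P hP _ (Pinv_nonneg P s) (Nat.floor_le_floor (Real.exp_le_exp.2 h))
  gcongr

theorem ff_int (P : Set ℕ) (hP : ∀ n ∈ P, 2 ≤ n) (s a b : ℝ) :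
    IntervalIntegrable (ff P s) MeasureTheory.volume a b := by
  unfold ff
  have : Monotone (fun x : ℝ => Fz P (Pval P s)⁻¹ ⌊Real.exp x⌋₊) := fun x y h =>
    Fz_mono P hP _ (Pinv_nonneg P s) (Nat.floor_le_floor (Real.exp_le_exp.2 h))
  exact (this.intervalIntegrable (a := a) (b := b)).continuousOn_mul (by fun_prop)

theorem ff_rec_fin (P : Set ℕ) (hP : ∀ n ∈ P, 2 ≤ n) (s x y : ℝ) (hxy : y ≤ x) :
    ff P s y = wt s y + ∑ n ∈ EN P ⌊Real.exp x⌋₊, pw P s n * ff P s (y - Real.log n) := by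
  have hlog : ∀ n ∈ P, 0 < Real.log n := fun n hn =>
    Real.log_pos (by exact_mod_cast (by have := hP n hn; omega : 1 < n))
  rcases lt_or_ge y 0 with hy | hy
  · rw [ff_neg P s y hy, wt, if_neg (not_le.2 hy), zero_add]
    symm
    refine Finset.sum_eq_zero fun n hn => ?_
    have := hlog n ((mem_EN _ _ _).1 hn).2
    rw [ff_neg P s _ (by linarith), mul_zero]
  · have h1 : 1 ≤ ⌊Real.exp y⌋₊ := Nat.one_le_floor_iff _ |>.2 (Real.one_le_exp hy)
    rw [wt, if_pos hy]
    conv_lhs => rw [ff, Fz_rec P hP _ _ h1, mul_add, mul_one]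
    congr 1
    have hsub : EN P ⌊Real.exp y⌋₊ ⊆ EN P ⌊Real.exp x⌋₊ := by
      intro n hn
      rw [mem_EN] at hn ⊢
      exact ⟨⟨hn.1.1, hn.1.2.trans (Nat.floor_le_floor (Real.exp_le_exp.2 hxy))⟩, hn.2⟩
    rw [← Finset.sum_subset hsub, Finset.mul_sum, Finset.mul_sum]
    · refine Finset.sum_congr rfl fun n hn => ?_
      have hn' := (mem_EN _ _ _).1 hn
      have hn0 : (0:ℝ) < n := by exact_mod_cast hn'.1.1
      have e1 : Real.exp (y - Real.log n) = Real.exp y / n := by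
        rw [Real.exp_sub, Real.exp_log hn0]
      have e2 : Real.exp (-s * (y - Real.log n)) = Real.exp (-s*y) * (n:ℝ)^s := by
        rw [Real.rpow_def_of_pos hn0, ← Real.exp_add]; ring_nf
      rw [ff, pw, e1, e2, Nat.floor_div_natCast, Real.rpow_neg hn0.le]
      have : (n:ℝ)^s ≠ 0 := (Real.rpow_pos_of_pos hn0 s).ne'
      rw [div_mul_eq_mul_div, div_eq_mul_inv]
      field_simp
    · intro n hn hn2
      rw [mem_EN] at hn hn2
      have hn0 : (0:ℝ) < n := by exact_mod_cast hn.1.1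
      have : ⌊Real.exp y⌋₊ < n := by
        by_contra h; exact hn2 ⟨⟨hn.1.1, by omega⟩, hn.2⟩
      have := (Nat.floor_lt (Real.exp_pos y).le).1 this
      rw [ff_neg, mul_zero]
      rw [sub_neg, Real.lt_log_iff_exp_lt hn0]; exact this

theorem ff_rec (P : Set ℕ) (hP : ∀ n ∈ P, 2 ≤ n) (s x : ℝ) :
    HasSum (fun n : P => pw P s n * ff P s (x - Real.log n)) (ff P s x - wt s x) := by
  have := tsum_EN P hP (fun n => pw P s n * ff P s (x - Real.log n)) ⌊Real.exp x⌋₊ ?_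
  · rw [ff_rec_fin P hP s x x le_rfl]
    simpa using this
  · intro n hn h
    have hn0 : (0:ℝ) < n := by exact_mod_cast (by have := hP n hn; omega : 0 < n)
    have := (Nat.floor_lt (Real.exp_pos x).le).1 h
    rw [ff_neg, mul_zero]
    rw [sub_neg, Real.lt_log_iff_exp_lt hn0]; exact this

theorem G_neg (P : Set ℕ) (s x : ℝ) (hx : x < 0) : ∫ y in (0:ℝ)..x, ff P s y = 0 := by
  rw [intervalIntegral.integral_symm, neg_eq_zero]
  apply intervalIntegral.integral_zero_ae
  have : ∀ᵐ y : ℝ, y ≠ 0 := by simp [MeasureTheory.ae_iff]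
  filter_upwards [this] with y hy hy2
  rw [Set.uIoc_of_le hx.le] at hy2
  exact ff_neg P s y (lt_of_le_of_ne hy2.2 hy)

theorem wt_int (s x : ℝ) (hs : 0 < s) (hx : 0 ≤ x) :
    ∫ y in (0:ℝ)..x, wt s y = (1 - Real.exp (-s*x))/s := by
  have : ∫ y in (0:ℝ)..x, wt s y = ∫ y in (0:ℝ)..x, Real.exp (-s*y) := by
    refine intervalIntegral.integral_congr fun y hy => ?_
    rw [Set.uIcc_of_le hx] at hy
    simp [wt, hy.1]
  rw [this, intervalIntegral.integral_comp_mul_left (fun y => Real.exp y) (by linarith : -s ≠ 0)]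
  rw [integral_exp]; simp; field_simp; ring

theorem wt_intble (s x : ℝ) (hx : 0 ≤ x) :
    IntervalIntegrable (wt s) MeasureTheory.volume 0 x := by
  have : IntervalIntegrable (fun y => Real.exp (-s*y)) MeasureTheory.volume 0 x :=
    Continuous.intervalIntegrable (by fun_prop) _ _
  refine this.congr fun y hy => ?_
  rw [Set.uIoc_of_le hx] at hy
  simp [wt, hy.1.le]

theorem H_hasSum (P : Set ℕ) (hP : ∀ n ∈ P, 2 ≤ n) (hne : P.Nonempty) (s x : ℝ) (hs : 0 < s)
    (hsum : Summable (fun n : P => ((n : ℕ) : ℝ) ^ (-s))) (hx : 0 ≤ x) :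
    HasSum (fun n : P => pw P s n * ∫ y in (0:ℝ)..Real.log n, ff P s (x - y))
      ((1 - Real.exp (-s*x))/s) := by
  set G : ℝ → ℝ := fun x => ∫ y in (0:ℝ)..x, ff P s y with hG
  have h1 : G x = (1 - Real.exp (-s*x))/s +
      ∑ n ∈ EN P ⌊Real.exp x⌋₊, pw P s n * G (x - Real.log n) := by
    have hI : ∀ n ∈ EN P ⌊Real.exp x⌋₊, IntervalIntegrable
        (fun y => pw P s n * ff P s (y - Real.log n)) MeasureTheory.volume 0 x := by
      intro n _
      refine IntervalIntegrable.const_mul ?_ _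
      have := (ff_int P hP s (0 - Real.log n) (x - Real.log n)).comp_sub_right (Real.log n)
      simpa using this
    have : G x = ∫ y in (0:ℝ)..x, (wt s y +
        ∑ n ∈ EN P ⌊Real.exp x⌋₊, pw P s n * ff P s (y - Real.log n)) := by
      refine intervalIntegral.integral_congr fun y hy => ?_
      rw [Set.uIcc_of_le hx] at hy
      exact ff_rec_fin P hP s x y hy.2
    rw [this, intervalIntegral.integral_add (wt_intble s x hx), wt_int s x hs hx,
      intervalIntegral.integral_finsetSum hI]
    · congr 1
      refine Finset.sum_congr rfl fun n hn => ?_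
      rw [intervalIntegral.integral_const_mul,
        intervalIntegral.integral_comp_sub_right (fun y => ff P s y)]
      congr 1
      have hn' := (mem_EN _ _ _).1 hn
      have hl : 0 < Real.log n := Real.log_pos (by exact_mod_cast (by have := hP n hn'.2; omega : 1 < n))
      have := G_neg P s (0 - Real.log n) (by linarith)
      rw [hG]; dsimp only
      rw [← intervalIntegral.integral_add_adjacent_intervals (ff_int P hP s 0 (0 - Real.log n))
        (ff_int P hP s (0 - Real.log n) (x - Real.log n)), this, zero_add]
    · have := IntervalIntegrable.sum (EN P ⌊Real.exp x⌋₊) hI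
      rwa [show (∑ n ∈ EN P ⌊Real.exp x⌋₊, fun y => pw P s n * ff P s (y - Real.log n)) =
        fun y => ∑ n ∈ EN P ⌊Real.exp x⌋₊, pw P s n * ff P s (y - Real.log n) from by
          funext y; simp] at this
  have h2 : HasSum (fun n : P => pw P s n * G (x - Real.log n))
      (∑ n ∈ EN P ⌊Real.exp x⌋₊, pw P s n * G (x - Real.log n)) := by
    refine tsum_EN P hP (fun n => pw P s n * G (x - Real.log n)) _ ?_
    intro n hn h
    have hn0 : (0:ℝ) < n := by exact_mod_cast (by have := hP n hn; omega : 0 < n)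
    have := (Nat.floor_lt (Real.exp_pos x).le).1 h
    rw [hG]; dsimp only; rw [G_neg, mul_zero]
    rw [sub_neg, Real.lt_log_iff_exp_lt hn0]; exact this
  have h3 := (pw_hasSum P hP hne s hsum).mul_right (G x)
  have h4 := h3.sub h2
  have e1 : (fun n : P => pw P s n * ∫ y in (0:ℝ)..Real.log n, ff P s (x - y)) =
      fun n : P => pw P s n * G x - pw P s n * G (x - Real.log n) := by
    funext n
    rw [← mul_sub]
    congr 1
    rw [intervalIntegral.integral_comp_sub_left (fun y => ff P s y), sub_zero, hG]
    dsimp only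
    rw [intervalIntegral.integral_interval_sub_left (ff_int P hP s _ _) (ff_int P hP s _ _)]
  have e2 : (1 - Real.exp (-s*x))/s =
      1 * G x - ∑ n ∈ EN P ⌊Real.exp x⌋₊, pw P s n * G (x - Real.log n) := by linarith
  rw [e1, e2]; exact h4


structure Ctx (P : Set ℕ) (ρ δ : ℝ) : Prop where
  hP : ∀ n ∈ P, 2 ≤ n
  hne : P.Nonempty
  hδ : 0 < δ
  h3 : 3 * δ < ρ
  hs : Summable (fun n : P => ((n : ℕ) : ℝ) ^ (-(ρ - 3*δ)))

theorem wt_nonneg (s x : ℝ) : 0 ≤ wt s x := by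
  unfold wt; split_ifs <;> positivity

theorem wt_le (s x δ : ℝ) (h : δ ≤ s) : wt s x ≤ Real.exp (-δ*x) := by
  unfold wt; split_ifs
  · apply Real.exp_le_exp.2; nlinarith
  · positivity

namespace Ctx
variable {P : Set ℕ} {ρ δ : ℝ}

theorem one_le (c : Ctx P ρ δ) (n : P) : (1:ℝ) ≤ ((n:ℕ):ℝ) := by
  have := c.hP n n.2
  exact_mod_cast (by omega : 1 ≤ (n:ℕ))

theorem summ (c : Ctx P ρ δ) (s : ℝ) (h : ρ - 3*δ ≤ s) :
    Summable (fun n : P => ((n : ℕ) : ℝ) ^ (-s)) := by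
  refine Summable.of_nonneg_of_le (fun n => by positivity) (fun n => ?_) c.hs
  exact Real.rpow_le_rpow_of_exponent_le (c.one_le n) (by linarith)

theorem pos (c : Ctx P ρ δ) (s : ℝ) (h : ρ - 3*δ ≤ s) : 0 < Pval P s :=
  Pval_pos P c.hP c.hne s (c.summ s h)

theorem anti (c : Ctx P ρ δ) (s t : ℝ) (h : ρ - 3*δ ≤ s) (hst : s ≤ t) : Pval P t ≤ Pval P s := by
  refine Summable.tsum_le_tsum (fun n => ?_) (c.summ t (by linarith)) (c.summ s h)
  exact Real.rpow_le_rpow_of_exponent_le (c.one_le n) (by linarith)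

theorem pw_le (c : Ctx P ρ δ) (s : ℝ) (h1 : ρ - δ ≤ s) (h2 : s ≤ ρ + δ) (n : P) :
    pw P s n ≤ ((n:ℕ):ℝ)^(-(ρ-δ)) / Pval P (ρ+δ) := by
  have hδ := c.hδ
  unfold pw
  have a := c.pos (ρ+δ) (by linarith)
  have b := c.anti s (ρ+δ) (by linarith) h2
  have d := Real.rpow_le_rpow_of_exponent_le (c.one_le n) (by linarith : -s ≤ -(ρ-δ))
  gcongr

theorem le_pw (c : Ctx P ρ δ) (s : ℝ) (h1 : ρ - δ ≤ s) (h2 : s ≤ ρ + δ) (n : P) :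
    ((n:ℕ):ℝ)^(-(ρ+δ)) / Pval P (ρ-δ) ≤ pw P s n := by
  have hδ := c.hδ
  unfold pw
  have a := c.pos s (by linarith)
  have b := c.anti (ρ-δ) s (by linarith) h1
  have d := Real.rpow_le_rpow_of_exponent_le (c.one_le n) (by linarith : -(ρ+δ) ≤ -s)
  gcongr

theorem bnd (c : Ctx P ρ δ) : ∃ C : ℝ, 0 < C ∧ ∀ s, ρ - δ ≤ s → s ≤ ρ + δ → ∀ x, ff P s x ≤ C := by
  have hδ := c.hδ
  have h3 := c.h3
  obtain ⟨n0, hn0⟩ := c.hne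
  have hl : 0 < Real.log n0 := Real.log_pos (by exact_mod_cast (by have := c.hP n0 hn0; omega : 1 < n0))
  have hn0' : (0:ℝ) < n0 := by exact_mod_cast (by have := c.hP n0 hn0; omega : 0 < n0)
  set l := Real.log n0 with hldef
  have hPp := c.pos (ρ-δ) (by linarith)
  set c0 : ℝ := (n0:ℝ)^(-(ρ+δ)) / Pval P (ρ-δ) * (l * Real.exp (-(ρ+δ)*l)) with hc0
  have hc0' : 0 < c0 := by positivity
  refine ⟨1/(ρ-δ)/c0, by have : 0 < ρ - δ := by linarith
                         positivity, fun s h1 h2 x => ?_⟩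
  rcases lt_or_ge x 0 with hx | hx
  · rw [ff_neg _ _ _ hx]
    have : 0 < ρ - δ := by linarith
    positivity
  have hs : 0 < s := by linarith
  have hH := H_hasSum P c.hP c.hne s (x+l) hs (c.summ s (by linarith)) (by linarith)
  have t0 : ∀ n : P, 0 ≤ pw P s n * ∫ y in (0:ℝ)..Real.log n, ff P s (x + l - y) := by
    intro n
    refine mul_nonneg (pw_nonneg _ _ _) (intervalIntegral.integral_nonneg ?_ fun y _ => ff_nonneg _ _ _)
    exact Real.log_nonneg (c.one_le n)
  have t1 := le_hasSum hH ⟨n0, hn0⟩ (fun n _ => t0 n)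
  have t2 : l * (Real.exp (-(ρ+δ)*l) * ff P s x) ≤ ∫ y in (0:ℝ)..l, ff P s (x + l - y) := by
    have : l * (Real.exp (-(ρ+δ)*l) * ff P s x) = ∫ y in (0:ℝ)..l, (Real.exp (-(ρ+δ)*l) * ff P s x) := by
      rw [intervalIntegral.integral_const, sub_zero, smul_eq_mul]
    rw [this]
    refine intervalIntegral.integral_mono_on hl.le (by simp) ?_ ?_
    · have := (ff_int P c.hP s (x+l-0) (x+l-l)).comp_sub_left (x+l)
      simpa using this
    · intro y hy
      have a := ff_mono P c.hP s x (x+l-y) (by linarith [hy.2])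
      have b : Real.exp (s*(x+l-y-x)) ≤ Real.exp ((ρ+δ)*l) := by
        apply Real.exp_le_exp.2
        have : x+l-y-x ≤ l := by linarith [hy.1]
        nlinarith
      have d := a.trans (mul_le_mul_of_nonneg_right b (ff_nonneg P s _))
      rw [neg_mul, Real.exp_neg, inv_mul_le_iff₀ (Real.exp_pos _)]
      exact d
  rw [le_div_iff₀ hc0', mul_comm]
  have t3 : (1 - Real.exp (-s * (x+l)))/s ≤ 1/(ρ-δ) := by
    have : 0 < ρ - δ := by linarith
    have := Real.exp_pos (-s * (x+l))
    calc _ ≤ 1/s := by gcongr; linarith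
      _ ≤ _ := by gcongr
  refine le_trans ?_ (t1.trans t3)
  have t4 := c.le_pw s h1 h2 ⟨n0, hn0⟩
  calc c0 * ff P s x = (n0:ℝ)^(-(ρ+δ)) / Pval P (ρ-δ) * (l * (Real.exp (-(ρ+δ)*l) * ff P s x)) := by
        rw [hc0]; ring
    _ ≤ _ := by
      have := ff_nonneg P s x
      gcongr
      exact pw_nonneg _ _ _

theorem expsum (c : Ctx P ρ δ) (s x : ℝ) (h1 : ρ - δ ≤ s) (h2 : s ≤ ρ + δ) :
    Summable (fun n : P => pw P s n * Real.exp (-δ * (x - Real.log n))) ∧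
    ∑' n : P, pw P s n * Real.exp (-δ * (x - Real.log n)) ≤
      Real.exp (-δ*x) * (Pval P (ρ-2*δ) / Pval P (ρ+δ)) := by
  have hδ := c.hδ
  have e : ∀ n : P, ((n:ℕ):ℝ)^(-(ρ-δ)) / Pval P (ρ+δ) * Real.exp (-δ * (x - Real.log n)) =
      Real.exp (-δ*x) / Pval P (ρ+δ) * ((n:ℕ):ℝ)^(-(ρ-2*δ)) := by
    intro n
    have hn : (0:ℝ) < ((n:ℕ):ℝ) := lt_of_lt_of_le one_pos (c.one_le n)
    have : Real.exp (-δ * (x - Real.log n)) = Real.exp (-δ*x) * ((n:ℕ):ℝ)^δ := by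
      rw [Real.rpow_def_of_pos hn, ← Real.exp_add]; ring_nf
    rw [this, show -(ρ-2*δ) = -(ρ-δ) + δ by ring, Real.rpow_add hn]; ring
  have hle : ∀ n : P, pw P s n * Real.exp (-δ * (x - Real.log n)) ≤
      Real.exp (-δ*x) / Pval P (ρ+δ) * ((n:ℕ):ℝ)^(-(ρ-2*δ)) := by
    intro n
    rw [← e]
    exact mul_le_mul_of_nonneg_right (c.pw_le s h1 h2 n) (Real.exp_pos _).le
  have hs := (c.summ (ρ-2*δ) (by linarith)).mul_left (Real.exp (-δ*x) / Pval P (ρ+δ))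
  have hs1 : Summable (fun n : P => pw P s n * Real.exp (-δ * (x - Real.log n))) :=
    Summable.of_nonneg_of_le (fun n => mul_nonneg (pw_nonneg _ _ _) (Real.exp_pos _).le) hle hs
  refine ⟨hs1, ?_⟩
  refine (Summable.tsum_le_tsum hle hs1 hs).trans ?_
  rw [tsum_mul_left, Pval, Pval]
  apply le_of_eq; ring

theorem energy (c : Ctx P ρ δ) (C : ℝ) (hC : 0 < C)
    (hb : ∀ s, ρ - δ ≤ s → s ≤ ρ + δ → ∀ x, ff P s x ≤ C) (n0 : P) (J : ℕ) :
    ∃ B : ℝ, 0 ≤ B ∧ ∀ s, ρ - δ ≤ s → s ≤ ρ + δ → ∀ x,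
      J * pw P s n0 * (ff P s (x - Real.log n0) - ff P s x)^2 ≤
        C^2 - (ff P s x)^2 + B * Real.exp (-δ*x) := by
  have hδ := c.hδ
  have h3 := c.h3
  set l := Real.log n0 with hl
  have hl0 : 0 ≤ l := Real.log_nonneg (c.one_le n0)
  set β := Pval P (ρ-2*δ) / Pval P (ρ+δ) with hβ
  have hβ0 : 0 ≤ β := div_nonneg (c.pos _ (by linarith)).le (c.pos _ (by linarith)).le
  induction J with
  | zero =>
    refine ⟨0, le_rfl, fun s h1 h2 x => ?_⟩
    have := hb s h1 h2 x
    have := ff_nonneg P s x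
    simp; gcongr
  | succ J ih =>
    obtain ⟨B, hB, ih⟩ := ih
    refine ⟨B * β + 2*C*J*Real.exp (δ*l) + 2*C, by positivity, fun s h1 h2 x => ?_⟩
    set g := ff P s with hg
    have g0 : ∀ x, 0 ≤ g x := ff_nonneg P s
    have gC : ∀ x, g x ≤ C := hb s h1 h2
    set D : ℝ → ℝ := fun x => g (x - l) - g x with hD
    have DC : ∀ x, |D x| ≤ C := fun x => abs_le.2
      ⟨by simp only [hD]; linarith [g0 (x-l), gC x], by simp only [hD]; linarith [g0 x, gC (x-l)]⟩
    have p0 : ∀ n, 0 ≤ pw P s n := pw_nonneg P s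
    have S1 := pw_hasSum P c.hP c.hne s (c.summ s (by linarith))
    have S2 := ff_rec P c.hP s x
    have S2' := ff_rec P c.hP s (x-l)
    rw [← hg] at S2 S2'
    set e := wt s (x-l) - wt s x with he
    have S3 : HasSum (fun n : P => pw P s n * D (x - Real.log n)) (D x - e) := by
      have := S2'.sub S2
      have e1 : (fun n : P => pw P s n * D (x - Real.log n)) = fun n : P =>
          pw P s n * g (x - l - Real.log n) - pw P s n * g (x - Real.log n) := by
        funext n; simp only [hD]; rw [← mul_sub]; congr 3; ring
      rw [e1, show D x - e = g (x - l) - wt s (x-l) - (g x - wt s x) by simp only [hD, he]; ring]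
      exact this
    have bs : ∀ (h : ℝ → ℝ) (K : ℝ), (∀ y, 0 ≤ h y) → (∀ y, h y ≤ K) →
        Summable (fun n : P => pw P s n * h (x - Real.log n)) := by
      intro h K hh hK
      exact Summable.of_nonneg_of_le (fun n => mul_nonneg (p0 _) (hh _))
        (fun n => mul_le_mul_of_nonneg_left (hK _) (p0 _)) (S1.summable.mul_right K)
    have SD := (bs (fun y => D y^2) (C^2) (fun y => sq_nonneg _)
      (fun y => by have := DC y; rw [← sq_abs]; gcongr)).hasSum
    have Sg := (bs (fun y => g y^2) (C^2) (fun y => sq_nonneg _)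
      (fun y => by have := gC y; have := g0 y; gcongr)).hasSum
    set QD := ∑' n : P, pw P s n * D (x - Real.log n)^2 with hQD
    set Qg := ∑' n : P, pw P s n * g (x - Real.log n)^2 with hQg
    have A1 : (D x - e)^2 ≤ QD := by
      have h := ((SD.sub (S3.mul_left (2*(D x - e)))).add (S1.mul_left ((D x - e)^2)))
      have hn : 0 ≤ QD - 2*(D x - e)*(D x - e) + (D x - e)^2*1 := by
        refine h.nonneg fun n => ?_
        have : pw P s n * D (x - Real.log n)^2 - 2*(D x - e)*(pw P s n * D (x - Real.log n))
          + (D x - e)^2 * pw P s n = pw P s n * (D (x - Real.log n) - (D x - e))^2 := by ring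
        rw [this]
        exact mul_nonneg (p0 _) (sq_nonneg _)
      nlinarith
    have A2 : pw P s n0 * D x^2 ≤ Qg - (g x)^2 + 2 * g x * wt s x := by
      have h := ((Sg.sub (S2.mul_left (2*g x))).add (S1.mul_left ((g x)^2)))
      have hq : ∀ n : P, pw P s n * g (x - Real.log n)^2 - 2*g x*(pw P s n * g (x - Real.log n))
          + (g x)^2 * pw P s n = pw P s n * (g (x - Real.log n) - g x)^2 := by intro n; ring
      have := le_hasSum h n0 (fun n _ => by rw [hq]; exact mul_nonneg (p0 _) (sq_nonneg _))
      rw [hq] at this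
      refine this.trans (le_of_eq ?_)
      ring
    obtain ⟨E1, E2⟩ := c.expsum s x h1 h2
    have A3 : J * pw P s n0 * QD ≤ C^2 - Qg + B * (Real.exp (-δ*x) * β) := by
      have hl := SD.mul_left (J * pw P s n0)
      have hr := ((S1.mul_right (C^2)).sub Sg).add (E1.hasSum.mul_left B)
      have := hasSum_le (fun n => ?_) hl hr
      · refine this.trans ?_
        rw [one_mul]
        gcongr
      · have := mul_le_mul_of_nonneg_left (ih s h1 h2 (x - Real.log n)) (p0 n)
        simp only [hD]
        linarith
    have w1 := wt_nonneg s x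
    have w2 := wt_nonneg s (x-l)
    have w3 := wt_le s x δ (by linarith)
    have w4 := wt_le s (x-l) δ (by linarith)
    have w5 : Real.exp (-δ*(x-l)) = Real.exp (δ*l) * Real.exp (-δ*x) := by
      rw [← Real.exp_add]; ring_nf
    have w6 : Real.exp (-δ*x) ≤ Real.exp (-δ*(x-l)) := by
      apply Real.exp_le_exp.2; nlinarith
    have he' : |e| ≤ Real.exp (δ*l) * Real.exp (-δ*x) := by
      rw [← w5, he, abs_le]; constructor <;> linarith
    have A4 : D x^2 ≤ QD + 2*C*(Real.exp (δ*l) * Real.exp (-δ*x)) := by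
      have : D x * e ≤ C * (Real.exp (δ*l) * Real.exp (-δ*x)) := by
        calc D x * e ≤ |D x * e| := le_abs_self _
          _ = |D x| * |e| := abs_mul _ _
          _ ≤ _ := mul_le_mul (DC x) he' (abs_nonneg _) hC.le
      nlinarith [sq_nonneg e]
    have p1 : pw P s n0 ≤ 1 := le_hasSum S1 n0 (fun n _ => p0 _)
    have A5 : J * pw P s n0 * D x^2 ≤ J * pw P s n0 * QD + J * (2*C*(Real.exp (δ*l) * Real.exp (-δ*x))) := by
      have hJ : (0:ℝ) ≤ J := Nat.cast_nonneg _
      have q : J * pw P s n0 ≤ J := by nlinarith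
      have q0 : 0 ≤ J * pw P s n0 := mul_nonneg hJ (p0 _)
      have r0 : 0 ≤ 2*C*(Real.exp (δ*l) * Real.exp (-δ*x)) := by positivity
      have := mul_le_mul_of_nonneg_left A4 q0
      have := mul_le_mul_of_nonneg_right q r0
      linarith
    have A6 : 2 * g x * wt s x ≤ 2 * C * Real.exp (-δ*x) := by
      have := gC x; have := g0 x
      gcongr
    have : ((J+1 : ℕ):ℝ) * pw P s n0 * D x^2 = J * pw P s n0 * D x^2 + pw P s n0 * D x^2 := by
      push_cast; ring
    calc _ = _ := this
      _ ≤ _ := by linarith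

theorem near (c : Ctx P ρ δ) (n0 : P) (s x : ℕ → ℝ) (hs1 : ∀ᶠ N in atTop, ρ - δ ≤ s N)
    (hs2 : ∀ᶠ N in atTop, s N ≤ ρ + δ) (hx : Tendsto x atTop atTop) :
    Tendsto (fun N => ff P (s N) (x N - Real.log n0) - ff P (s N) (x N)) atTop (nhds 0) := by
  have hδ := c.hδ
  have h3 := c.h3
  obtain ⟨C, hC, hb⟩ := c.bnd
  set q := ((n0:ℕ):ℝ)^(-(ρ+δ)) / Pval P (ρ-δ) with hq
  have hn : (0:ℝ) < ((n0:ℕ):ℝ) := lt_of_lt_of_le one_pos (c.one_le n0)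
  have hq0 : 0 < q := by have := c.pos (ρ-δ) (by linarith); positivity
  rw [Metric.tendsto_nhds]
  intro ε hε
  obtain ⟨J, hJ⟩ := exists_nat_gt ((C^2+1)/(q*ε^2))
  obtain ⟨B, hB, he⟩ := c.energy C hC hb n0 J
  have hx2 : Tendsto (fun N => B * Real.exp (-δ * x N)) atTop (nhds (B*0)) := by
    refine Tendsto.const_mul _ (Real.tendsto_exp_atBot.comp ?_)
    exact hx.const_mul_atTop_of_neg (by linarith)
  rw [mul_zero] at hx2
  filter_upwards [hs1, hs2, hx2.eventually (gt_mem_nhds one_pos)] with N h1 h2 h4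
  have := he (s N) h1 h2 (x N)
  rw [dist_zero_right, Real.norm_eq_abs]
  set d := ff P (s N) (x N - Real.log n0) - ff P (s N) (x N)
  rw [div_lt_iff₀ (by positivity)] at hJ
  have hle := c.le_pw (s N) h1 h2 n0
  have h5 : J * q * d^2 ≤ J * pw P (s N) n0 * d^2 := by gcongr
  have h6 : J * q * d^2 < J * q * ε^2 := by nlinarith [sq_nonneg (ff P (s N) (x N))]
  have h7 : d^2 < ε^2 := lt_of_mul_lt_mul_left h6 (by positivity)
  exact abs_lt_of_sq_lt_sq h7 hε.le

end Ctx

theorem af_log (P : Set ℕ) (hP : ∀ n ∈ P, 2 ≤ n) (G : AddSubgroup ℝ)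
    (hG : ∀ n ∈ P, Real.log n ∈ G) (m k : ℕ) (h : af P m k ≠ 0) : Real.log k ∈ G := by
  unfold af at h
  have := (Nat.card_ne_zero.1 h).1
  obtain ⟨t, ht1, ht2⟩ := this
  rw [← ht2, Nat.cast_prod, Real.log_prod]
  · exact G.sum_mem fun i _ => hG _ (ht1 i)
  · intro i _
    have := hP _ (ht1 i)
    exact_mod_cast (by omega : t i ≠ 0)

theorem Fz_cell (P : Set ℕ) (hP : ∀ n ∈ P, 2 ≤ n) (G : AddSubgroup ℝ)
    (hG : ∀ n ∈ P, Real.log n ∈ G) (z x y : ℝ) (hxy : x ≤ y)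
    (h : ∀ g ∈ G, x < g → y < g) : Fz P z ⌊Real.exp x⌋₊ = Fz P z ⌊Real.exp y⌋₊ := by
  have hle : ⌊Real.exp x⌋₊ ≤ ⌊Real.exp y⌋₊ := Nat.floor_le_floor (Real.exp_le_exp.2 hxy)
  rw [Fz_eq P hP z _ _ hle, Fz_eq P hP z _ _ le_rfl]
  refine Finset.sum_congr rfl fun m _ => ?_
  congr 1
  unfold cnt
  refine Finset.sum_subset (Finset.Icc_subset_Icc_right hle) fun k hk hk2 => ?_
  rw [Finset.mem_Icc] at hk hk2
  by_contra h0
  have h0' : af P m k ≠ 0 := by exact_mod_cast h0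
  have hkG := af_log P hP G hG m k h0'
  have hk0 : (0:ℝ) < k := by exact_mod_cast hk.1
  have h1 : x < Real.log k := by
    rw [Real.lt_log_iff_exp_lt hk0]
    exact (Nat.floor_lt (Real.exp_pos x).le).1 (by omega)
  have h2 := h _ hkG h1
  rw [Real.lt_log_iff_exp_lt hk0] at h2
  have := (Nat.floor_lt (Real.exp_pos y).le).2 h2
  omega

theorem ff_cell (P : Set ℕ) (hP : ∀ n ∈ P, 2 ≤ n) (G : AddSubgroup ℝ)
    (hG : ∀ n ∈ P, Real.log n ∈ G) (h : ℝ) (hh : 0 < h) (hGh : ∀ g ∈ G, ∃ k : ℤ, g = k * h)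
    (s x y : ℝ) (hxy : ⌊x/h⌋ = ⌊y/h⌋) : ff P s x = Real.exp (s*(y-x)) * ff P s y := by
  have key : ∀ x y : ℝ, ⌊x/h⌋ = ⌊y/h⌋ → x ≤ y → ∀ z, Fz P z ⌊Real.exp x⌋₊ = Fz P z ⌊Real.exp y⌋₊ := by
    intro x y hxy hle z
    refine Fz_cell P hP G hG z x y hle fun g hg hxg => ?_
    obtain ⟨k, rfl⟩ := hGh g hg
    have : x / h < k := by rwa [div_lt_iff₀ hh]
    rw [← Int.floor_lt, hxy, Int.floor_lt, div_lt_iff₀ hh] at this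
    exact this
  have : Fz P (Pval P s)⁻¹ ⌊Real.exp x⌋₊ = Fz P (Pval P s)⁻¹ ⌊Real.exp y⌋₊ := by
    rcases le_total x y with hle | hle
    · exact key x y hxy hle _
    · exact (key y x hxy.symm hle _).symm
  unfold ff
  rw [this, ← mul_assoc, ← Real.exp_add]
  ring_nf

namespace Ctx
variable {P : Set ℕ} {ρ δ : ℝ}

theorem gshift (c : Ctx P ρ δ) (s : ℕ → ℝ) (hs1 : ∀ᶠ N in atTop, ρ - δ ≤ s N)
    (hs2 : ∀ᶠ N in atTop, s N ≤ ρ + δ) (g : ℝ)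
    (hg : g ∈ AddSubgroup.closure ((fun n : ℕ => Real.log n) '' P)) :
    ∀ L : ℕ → ℝ, Tendsto L atTop atTop →
    Tendsto (fun N => ff P (s N) (L N - g) - ff P (s N) (L N)) atTop (nhds 0) := by
  induction hg using AddSubgroup.closure_induction with
  | mem x hx =>
    obtain ⟨n, hn, rfl⟩ := hx
    intro L hL
    exact c.near ⟨n, hn⟩ s L hs1 hs2 hL
  | zero => intro L hL; simp
  | add x y _ _ hx hy =>
    intro L hL
    have h1 := hx L hL
    have h2 := hy (fun N => L N - x) (tendsto_atTop_add_const_right _ (-x) hL)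
    have := h1.add h2
    rw [add_zero] at this
    refine this.congr fun N => ?_
    rw [sub_sub]; ring
  | neg x _ hx =>
    intro L hL
    have h2 := hx (fun N => L N + x) (tendsto_atTop_add_const_right _ x hL)
    have := h2.neg
    rw [neg_zero] at this
    refine this.congr fun N => ?_
    simp

theorem shift (c : Ctx P ρ δ) (L : ℕ → ℝ) (hL : Tendsto L atTop atTop) (y : ℝ) :
    ∃ (d : ℕ → ℝ) (M : ℝ), (∀ N, |d N| ≤ M) ∧ ∀ s : ℕ → ℝ, (∀ᶠ N in atTop, ρ - δ ≤ s N) →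
      (∀ᶠ N in atTop, s N ≤ ρ + δ) →
      Tendsto (fun N => ff P (s N) (L N - y) - Real.exp (s N * d N) * ff P (s N) (L N))
        atTop (nhds 0) := by
  have hδ := c.hδ
  have h3 := c.h3
  obtain ⟨C, hC, hb⟩ := c.bnd
  set G := AddSubgroup.closure ((fun n : ℕ => Real.log n) '' P) with hGdef
  have hG : ∀ n ∈ P, Real.log n ∈ G := fun n hn =>
    AddSubgroup.subset_closure ⟨n, hn, rfl⟩
  rcases AddSubgroup.dense_or_cyclic G with hd | ⟨a, ha⟩
  · refine ⟨fun _ => 0, 0, by simp, fun s hs1 hs2 => ?_⟩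
    simp only [mul_zero, Real.exp_zero, one_mul]
    rw [Metric.tendsto_nhds]
    intro ε hε
    obtain ⟨η, hη, hη2⟩ : ∃ η > 0, (Real.exp ((ρ+δ)*η) - 1) * C < ε/2 := by
      have : Tendsto (fun η => (Real.exp ((ρ+δ)*η) - 1) * C) (nhdsWithin 0 (Set.Ioi 0)) (nhds 0) := by
        have : Continuous (fun η => (Real.exp ((ρ+δ)*η) - 1) * C) := by fun_prop
        have := this.tendsto 0
        simp only [mul_zero, Real.exp_zero, sub_self, zero_mul] at this
        exact this.mono_left nhdsWithin_le_nhds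
      have h1 := this.eventually (gt_mem_nhds (half_pos hε))
      obtain ⟨η, h2, h4⟩ := (h1.and self_mem_nhdsWithin).exists
      exact ⟨η, h4, h2⟩
    obtain ⟨g1, hg1, hg1'⟩ := hd.exists_mem_open (isOpen_Ioo (a := y-η) (b := y)) ⟨y-η/2, by constructor <;> linarith⟩
    obtain ⟨g2, hg2, hg2'⟩ := hd.exists_mem_open (isOpen_Ioo (a := y) (b := y+η)) ⟨y+η/2, by constructor <;> linarith⟩
    have k1 := (Metric.tendsto_nhds.1 (c.gshift s hs1 hs2 g1 hg1 L hL)) (ε/2) (half_pos hε)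
    have k2 := (Metric.tendsto_nhds.1 (c.gshift s hs1 hs2 g2 hg2 L hL)) (ε/2) (half_pos hε)
    filter_upwards [hs1, hs2, k1, k2] with N h1 h2 k1 k2
    rw [dist_zero_right, Real.norm_eq_abs] at *
    have ex : ∀ t, t ≤ η → Real.exp (s N * t) - 1 ≤ Real.exp ((ρ+δ)*η) - 1 := by
      intro t ht
      apply sub_le_sub_right
      apply Real.exp_le_exp.2
      have : s N * t ≤ s N * η := by apply mul_le_mul_of_nonneg_left ht; linarith
      nlinarith
    have m1 := ff_mono P c.hP (s N) (L N - y) (L N - g1) (by linarith [hg1'.2])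
    have m2 := ff_mono P c.hP (s N) (L N - g2) (L N - y) (by linarith [hg2'.1])
    have e1 := ex (L N - g1 - (L N - y)) (by linarith [hg1'.1])
    have e2 := ex (L N - y - (L N - g2)) (by linarith [hg2'.2])
    have b1 := hb (s N) h1 h2 (L N - g1)
    have b2 := hb (s N) h1 h2 (L N - y)
    have n1 := ff_nonneg P (s N) (L N - g1)
    have n2 := ff_nonneg P (s N) (L N - y)
    have E0 : 0 ≤ Real.exp ((ρ+δ)*η) - 1 := by
      have : 0 ≤ (ρ+δ)*η := by apply mul_nonneg <;> linarith
      linarith [Real.add_one_le_exp ((ρ+δ)*η)]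
    have q1 := (mul_le_mul_of_nonneg_right e1 n1).trans (mul_le_mul_of_nonneg_left b1 E0)
    have q2 := (mul_le_mul_of_nonneg_right e2 n2).trans (mul_le_mul_of_nonneg_left b2 E0)
    rw [abs_lt] at *
    constructor <;> linarith [k1.1, k1.2, k2.1, k2.2]
  · have ha0 : a ≠ 0 := by
      rintro rfl
      obtain ⟨n, hn⟩ := c.hne
      have := hG n hn
      rw [ha, AddSubgroup.mem_closure_singleton] at this
      obtain ⟨k, hk⟩ := this
      have h2 := c.hP n hn
      have : 0 < Real.log n := Real.log_pos (by exact_mod_cast (by omega : 1 < n))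
      rw [smul_zero] at hk
      linarith
    set h := |a| with hh
    have hh0 : 0 < h := abs_pos.2 ha0
    have haG : a ∈ G := by rw [ha]; exact AddSubgroup.subset_closure rfl
    have hhG : h ∈ G := by
      rcases abs_choice a with h1 | h1
      · rw [hh, h1]; exact haG
      · rw [hh, h1]; exact G.neg_mem haG
    have hGh : ∀ g ∈ G, ∃ k : ℤ, g = k * h := by
      intro g hg
      rw [ha, AddSubgroup.mem_closure_singleton] at hg
      obtain ⟨k, rfl⟩ := hg
      rcases abs_choice a with h1 | h1
      · exact ⟨k, by rw [hh, h1, zsmul_eq_mul]⟩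
      · exact ⟨-k, by rw [hh, h1, zsmul_eq_mul]; push_cast; ring⟩
    set j : ℕ → ℤ := fun N => ⌊L N / h⌋ - ⌊(L N - y)/h⌋ with hj
    have hjb : ∀ N, |y - j N * h| ≤ h := by
      intro N
      have a1 := Int.floor_le (L N / h)
      have a2 := Int.lt_floor_add_one (L N / h)
      have a3 := Int.floor_le ((L N - y) / h)
      have a4 := Int.lt_floor_add_one ((L N - y) / h)
      rw [le_div_iff₀ hh0] at a1 a3
      rw [div_lt_iff₀ hh0] at a2 a4
      simp only [hj]; push_cast
      rw [abs_le]; constructor <;> nlinarith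
    have hcell : ∀ N s, ff P s (L N - y) = Real.exp (s * (y - j N * h)) * ff P s (L N - j N * h) := by
      intro N s
      have := ff_cell P c.hP G hG h hh0 hGh s (L N - y) (L N - j N * h) ?_
      · rw [this]; ring_nf
      · have : (L N - j N * h)/h = L N / h - j N := by field_simp
        rw [this, Int.floor_sub_intCast]
        simp [hj]
    refine ⟨fun N => y - j N * h, h, hjb, fun s hs1 hs2 => ?_⟩
    obtain ⟨K, hK⟩ : ∃ K : ℤ, ∀ N, j N ∈ Finset.Icc (-K) K := by
      obtain ⟨K, hK⟩ := exists_int_gt ((|y| + h)/h)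
      refine ⟨K, fun N => ?_⟩
      rw [div_lt_iff₀ hh0] at hK
      have := hjb N
      rw [abs_le] at this
      have y1 := le_abs_self y
      have y2 := neg_abs_le y
      rw [Finset.mem_Icc]
      have u1 : (j N:ℝ) * h ≤ K * h := by linarith
      have u2 : (-K:ℝ) * h ≤ j N * h := by linarith
      have u1 := le_of_mul_le_mul_right u1 hh0
      have u2 := le_of_mul_le_mul_right u2 hh0
      constructor
      · exact_mod_cast u2
      · exact_mod_cast u1
    have hsum : Tendsto (fun N => ∑ i ∈ Finset.Icc (-K) K,
        |ff P (s N) (L N - i * h) - ff P (s N) (L N)|) atTop (nhds 0) := by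
      have : Tendsto (fun N => ∑ i ∈ Finset.Icc (-K) K,
        |ff P (s N) (L N - i * h) - ff P (s N) (L N)|) atTop (nhds (∑ i ∈ Finset.Icc (-K) K, 0)) := by
        refine tendsto_finsetSum _ fun i _ => ?_
        have := c.gshift s hs1 hs2 (i*h) (by rw [← zsmul_eq_mul]; exact G.zsmul_mem hhG i) L hL
        simpa using this.abs
      simpa using this
    have hsum2 := hsum.const_mul (Real.exp ((ρ+δ)*h))
    rw [mul_zero] at hsum2
    refine squeeze_zero_norm' ?_ hsum2
    filter_upwards [hs1, hs2] with N h1 h2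
    rw [hcell, ← mul_sub, Real.norm_eq_abs, abs_mul, abs_of_pos (Real.exp_pos _)]
    have e1 : Real.exp (s N * (y - j N * h)) ≤ Real.exp ((ρ+δ)*h) := by
      apply Real.exp_le_exp.2
      have := (abs_le.1 (hjb N)).2
      have : s N * (y - j N * h) ≤ s N * h := by apply mul_le_mul_of_nonneg_left this; linarith
      nlinarith
    have e2 := Finset.single_le_sum (f := fun i : ℤ => |ff P (s N) (L N - i * h) - ff P (s N) (L N)|)
      (fun i _ => abs_nonneg _) (hK N)
    exact mul_le_mul e1 e2 (abs_nonneg _) (Real.exp_pos _).le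

end Ctx

namespace Ctx
variable {P : Set ℕ} {ρ δ : ℝ}

theorem cross (c : Ctx P ρ δ) (L : ℕ → ℝ) (hL : Tendsto L atTop atTop) (s : ℕ → ℝ)
    (hs : Tendsto s atTop (nhds ρ)) (y : ℝ) :
    Tendsto (fun N => ff P ρ (L N) * ff P (s N) (L N - y) - ff P (s N) (L N) * ff P ρ (L N - y))
      atTop (nhds 0) := by
  have hδ := c.hδ
  have h3 := c.h3
  obtain ⟨C, hC, hb⟩ := c.bnd
  obtain ⟨d, M, hd, hsh⟩ := c.shift L hL y
  have hs1 : ∀ᶠ N in atTop, ρ - δ ≤ s N := hs.eventually (Ici_mem_nhds (by linarith))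
  have hs2 : ∀ᶠ N in atTop, s N ≤ ρ + δ := hs.eventually (Iic_mem_nhds (by linarith))
  have A := hsh s hs1 hs2
  have B := hsh (fun _ => ρ) (by simp [hδ.le]) (by simp [hδ.le])
  have hds : Tendsto (fun N => (s N - ρ) * d N) atTop (nhds 0) := by
    have h0 : Tendsto (fun N => |s N - ρ| * M) atTop (nhds 0) := by
      have := ((hs.sub_const ρ).abs).mul_const M
      simpa using this
    refine squeeze_zero_norm (fun N => ?_) h0
    rw [Real.norm_eq_abs, abs_mul]
    exact mul_le_mul_of_nonneg_left (hd N) (abs_nonneg _)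
  have hE : Tendsto (fun N => |Real.exp ((s N - ρ) * d N) - 1|) atTop (nhds 0) := by
    have := (((Real.continuous_exp.tendsto 0).comp hds).sub_const 1).abs
    simpa using this
  have hT := ((hE.const_mul (C * C * Real.exp (ρ * M))).add (A.abs.const_mul C)).add (B.abs.const_mul C)
  simp only [mul_zero, add_zero, abs_zero] at hT
  refine squeeze_zero_norm' ?_ hT
  filter_upwards [hs1, hs2] with N h1 h2
  rw [Real.norm_eq_abs]
  have b1 := hb (s N) h1 h2 (L N)
  have b2 := hb ρ (by linarith) (by linarith) (L N)
  have n1 := ff_nonneg P (s N) (L N)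
  have n2 := ff_nonneg P ρ (L N)
  have eq : ff P ρ (L N) * ff P (s N) (L N - y) - ff P (s N) (L N) * ff P ρ (L N - y) =
      ff P (s N) (L N) * ff P ρ (L N) * Real.exp (ρ * d N) * (Real.exp ((s N - ρ) * d N) - 1)
      + ff P ρ (L N) * (ff P (s N) (L N - y) - Real.exp (s N * d N) * ff P (s N) (L N))
      - ff P (s N) (L N) * (ff P ρ (L N - y) - Real.exp (ρ * d N) * ff P ρ (L N)) := by
    have : Real.exp (s N * d N) = Real.exp (ρ * d N) * Real.exp ((s N - ρ) * d N) := by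
      rw [← Real.exp_add]; ring_nf
    rw [this]; ring
  rw [eq]
  refine (abs_sub _ _).trans ?_
  refine add_le_add ((abs_add_le _ _).trans (add_le_add ?_ ?_)) ?_
  · rw [abs_mul]
    have : ff P (s N) (L N) * ff P ρ (L N) * Real.exp (ρ * d N) ≤ C * C * Real.exp (ρ * M) := by
      have hdM := (abs_le.1 (hd N)).2
      have hρ : 0 ≤ ρ := by linarith
      gcongr
    rw [abs_of_nonneg (by positivity)]
    gcongr
  · rw [abs_mul, abs_of_nonneg n2]; gcongr
  · rw [abs_mul, abs_of_nonneg n1]; gcongr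

theorem logsum (c : Ctx P ρ δ) (s : ℝ) (h : ρ - 2*δ ≤ s) :
    Summable (fun n : P => ((n:ℕ):ℝ)^(-s) * Real.log n) := by
  have hδ := c.hδ
  have := (c.summ (s-δ) (by linarith)).mul_right (1/δ)
  refine Summable.of_nonneg_of_le (fun n => ?_) (fun n => ?_) this
  · have := Real.log_nonneg (c.one_le n)
    positivity
  · have hn : (0:ℝ) < ((n:ℕ):ℝ) := lt_of_lt_of_le one_pos (c.one_le n)
    have h1 := Real.log_le_rpow_div hn.le hδ
    rw [show -(s-δ) = -s + δ by ring, Real.rpow_add hn, mul_assoc, mul_one_div]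
    gcongr

theorem dct (c : Ctx P ρ δ) (T : ℕ → P → ℝ) (M : ℝ)
    (hb : ∀ᶠ N in atTop, ∀ n : P, |T N n| ≤ M * (((n:ℕ):ℝ)^(-(ρ-δ)) * Real.log n))
    (ht : ∀ n, Tendsto (fun N => T N n) atTop (nhds 0)) :
    Tendsto (fun N => ∑' n, T N n) atTop (nhds 0) := by
  have hδ := c.hδ
  have := tendsto_tsum_of_dominated_convergence (f := T) (𝓕 := atTop) (g := fun _ => 0)
    ((c.logsum (ρ-δ) (by linarith)).mul_left M) ht (by simpa using hb)
  simpa using this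

theorem Pval_cont (c : Ctx P ρ δ) : ContinuousOn (Pval P) (Set.Icc (ρ-3*δ) (ρ+3*δ)) := by
  unfold Pval
  refine continuousOn_tsum (u := fun n : P => ((n:ℕ):ℝ)^(-(ρ-3*δ))) (fun n => ?_) c.hs ?_
  · have hn : ((n:ℕ):ℝ) ≠ 0 := (lt_of_lt_of_le one_pos (c.one_le n)).ne'
    exact (continuous_const.rpow continuous_neg (fun _ => Or.inl hn)).continuousOn
  · intro n x hx
    rw [Real.norm_eq_abs, abs_of_nonneg (by positivity)]
    exact Real.rpow_le_rpow_of_exponent_le (c.one_le n) (by linarith [hx.1])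

theorem Pval_contAt (c : Ctx P ρ δ) : ContinuousAt (Pval P) ρ :=
  c.Pval_cont.continuousAt (Icc_mem_nhds (by linarith [c.hδ]) (by linarith [c.hδ]))

theorem pw_tendsto (c : Ctx P ρ δ) (s : ℕ → ℝ) (hs : Tendsto s atTop (nhds ρ)) (n : P) :
    Tendsto (fun N => pw P (s N) n) atTop (nhds (pw P ρ n)) := by
  unfold pw
  have hn : ((n:ℕ):ℝ) ≠ 0 := (lt_of_lt_of_le one_pos (c.one_le n)).ne'
  refine Tendsto.div ?_ (c.Pval_contAt.tendsto.comp hs) (c.pos ρ (by linarith [c.hδ])).ne'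
  exact tendsto_const_nhds.rpow hs.neg (Or.inl hn)

theorem int_bd (c : Ctx P ρ δ) (s x C : ℝ) (n : P) (hb : ∀ x, ff P s x ≤ C) :
    |∫ y in (0:ℝ)..Real.log n, ff P s (x - y)| ≤ C * Real.log n := by
  have := intervalIntegral.norm_integral_le_of_norm_le_const (a := 0) (b := Real.log n)
    (f := fun y => ff P s (x - y)) (C := C) ?_
  · rwa [sub_zero, abs_of_nonneg (Real.log_nonneg (c.one_le n)), Real.norm_eq_abs] at this
  · intro y _
    rw [Real.norm_eq_abs, abs_of_nonneg (ff_nonneg _ _ _)]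
    exact hb _

theorem ff_int' (c : Ctx P ρ δ) (s x a b : ℝ) :
    IntervalIntegrable (fun y => ff P s (x - y)) MeasureTheory.volume a b := by
  have := (ff_int P c.hP s (x-a) (x-b)).comp_sub_left x
  simpa using this

theorem Hlim (s L : ℕ → ℝ) (hρ : 0 < ρ) (hs : Tendsto s atTop (nhds ρ)) (hL : Tendsto L atTop atTop) :
    Tendsto (fun N => (1 - Real.exp (-(s N) * L N))/s N) atTop (nhds (1/ρ)) := by
  have h1 : Tendsto (fun N => -(s N) * L N) atTop atBot :=
    Tendsto.neg_mul_atTop (by linarith : -ρ < 0) hs.neg hL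
  have h2 := Real.tendsto_exp_atBot.comp h1
  have := (h2.const_sub 1).div hs hρ.ne'
  rw [sub_zero] at this
  exact this

theorem ratio (c : Ctx P ρ δ) (L : ℕ → ℝ) (hL : Tendsto L atTop atTop) (s : ℕ → ℝ)
    (hs : Tendsto s atTop (nhds ρ)) :
    Tendsto (fun N => ff P (s N) (L N) - ff P ρ (L N)) atTop (nhds 0) := by
  have hδ := c.hδ
  have h3 := c.h3
  have hρ : 0 < ρ := by linarith
  obtain ⟨C, hC, hb⟩ := c.bnd
  have hs1 : ∀ᶠ N in atTop, ρ - δ ≤ s N := hs.eventually (Ici_mem_nhds (by linarith))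
  have hs2 : ∀ᶠ N in atTop, s N ≤ ρ + δ := hs.eventually (Iic_mem_nhds (by linarith))
  have hbρ := hb ρ (by linarith) (by linarith)
  set Ia : ℕ → P → ℝ := fun N n => ∫ y in (0:ℝ)..Real.log n, ff P (s N) (L N - y) with hIa
  set Ib : ℕ → P → ℝ := fun N n => ∫ y in (0:ℝ)..Real.log n, ff P ρ (L N - y) with hIb
  set T : ℕ → P → ℝ := fun N n => ff P ρ (L N) * (pw P (s N) n * Ia N n)
    - ff P (s N) (L N) * (pw P ρ n * Ib N n) with hT
  have hPp := c.pos (ρ+δ) (by linarith)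
  have hT0 : Tendsto (fun N => ∑' n, T N n) atTop (nhds 0) := by
    refine c.dct T (2*C*C/Pval P (ρ+δ)) ?_ ?_
    · filter_upwards [hs1, hs2] with N h1 h2 n
      have i1 := c.int_bd (s N) (L N) C n (hb _ h1 h2)
      have i2 := c.int_bd ρ (L N) C n hbρ
      have p1 := c.pw_le (s N) h1 h2 n
      have p2 := c.pw_le ρ (by linarith) (by linarith) n
      have p1' := pw_nonneg P (s N) n
      have p2' := pw_nonneg P ρ n
      have b1 := hb (s N) h1 h2 (L N)
      have b2 := hbρ (L N)
      have n1 := ff_nonneg P (s N) (L N)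
      have n2 := ff_nonneg P ρ (L N)
      have hl := Real.log_nonneg (c.one_le n)
      refine (abs_sub _ _).trans ?_
      rw [abs_mul, abs_mul, abs_mul, abs_mul, abs_of_nonneg n1, abs_of_nonneg n2,
        abs_of_nonneg p1', abs_of_nonneg p2']
      calc _ ≤ C * (((n:ℕ):ℝ)^(-(ρ-δ)) / Pval P (ρ+δ) * (C * Real.log n)) +
            C * (((n:ℕ):ℝ)^(-(ρ-δ)) / Pval P (ρ+δ) * (C * Real.log n)) := by gcongr
        _ = _ := by ring
    · intro n
      have hl := Real.log_nonneg (c.one_le n)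
      have hI : Tendsto (fun N => ff P ρ (L N) * Ia N n - ff P (s N) (L N) * Ib N n) atTop (nhds 0) := by
        have := intervalIntegral.tendsto_integral_filter_of_dominated_convergence
          (μ := MeasureTheory.volume) (a := 0) (b := Real.log n) (l := atTop)
          (F := fun N y => ff P ρ (L N) * ff P (s N) (L N - y) - ff P (s N) (L N) * ff P ρ (L N - y))
          (f := fun _ => (0:ℝ)) (fun _ => 2*C*C) ?_ ?_ (by simp) ?_
        · simp only [intervalIntegral.integral_zero] at this
          refine this.congr fun N => ?_
          rw [intervalIntegral.integral_sub ((c.ff_int' _ _ _ _).const_mul _)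
            ((c.ff_int' _ _ _ _).const_mul _), intervalIntegral.integral_const_mul,
            intervalIntegral.integral_const_mul]
        · refine Eventually.of_forall fun N => ?_
          exact (((c.ff_int' (s N) (L N) 0 (Real.log n)).const_mul (ff P ρ (L N))).sub
            ((c.ff_int' ρ (L N) 0 (Real.log n)).const_mul (ff P (s N) (L N)))).aestronglyMeasurable_restrict_uIoc
        · filter_upwards [hs1, hs2] with N h1 h2
          refine Eventually.of_forall fun y _ => ?_
          have b1 := hb (s N) h1 h2 (L N)
          have b2 := hbρ (L N)
          have b3 := hb (s N) h1 h2 (L N - y)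
          have b4 := hbρ (L N - y)
          have n1 := ff_nonneg P (s N) (L N)
          have n2 := ff_nonneg P ρ (L N)
          have n3 := ff_nonneg P (s N) (L N - y)
          have n4 := ff_nonneg P ρ (L N - y)
          refine (abs_sub _ _).trans ?_
          rw [abs_mul, abs_mul, abs_of_nonneg n1, abs_of_nonneg n2, abs_of_nonneg n3, abs_of_nonneg n4]
          calc _ ≤ C * C + C * C := by gcongr
            _ = _ := by ring
        · exact Eventually.of_forall fun y _ => c.cross L hL s hs y
      have hp := c.pw_tendsto s hs n
      have h1 := hp.mul hI
      have h2 : Tendsto (fun N => |pw P (s N) n - pw P ρ n| * (C * (C * Real.log n))) atTop (nhds 0) := by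
        have := ((hp.sub_const (pw P ρ n)).abs).mul_const (C * (C * Real.log n))
        simpa using this
      have h4 : Tendsto (fun N => (pw P (s N) n - pw P ρ n) * (ff P (s N) (L N) * Ib N n)) atTop (nhds 0) := by
        refine squeeze_zero_norm' ?_ h2
        filter_upwards [hs1, hs2] with N h1 h2
        have i2 := c.int_bd ρ (L N) C n hbρ
        have b1 := hb (s N) h1 h2 (L N)
        have n1 := ff_nonneg P (s N) (L N)
        rw [Real.norm_eq_abs, abs_mul, abs_mul (ff P (s N) (L N)), abs_of_nonneg n1]
        gcongr
      have := h1.add h4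
      rw [mul_zero, add_zero] at this
      refine this.congr fun N => ?_
      simp only [hT]; ring
  have hsumT : ∀ᶠ N in atTop, ∑' n, T N n = ff P ρ (L N) * ((1 - Real.exp (-(s N) * L N))/s N)
      - ff P (s N) (L N) * ((1 - Real.exp (-ρ * L N))/ρ) := by
    filter_upwards [hs1, hs2, hL.eventually_ge_atTop 0] with N h1 h2 h4
    have a1 := H_hasSum P c.hP c.hne (s N) (L N) (by linarith) (c.summ _ (by linarith)) h4
    have a2 := H_hasSum P c.hP c.hne ρ (L N) (by linarith) (c.summ _ (by linarith)) h4
    exact ((a1.mul_left (ff P ρ (L N))).sub (a2.mul_left (ff P (s N) (L N)))).tsum_eq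
  have hT1 := hT0.congr' hsumT
  have g1 := ((Hlim s L hρ hs hL).sub_const (1/ρ)).abs
  have g2 := ((Hlim (fun _ => ρ) L hρ tendsto_const_nhds hL).sub_const (1/ρ)).abs
  rw [sub_self, abs_zero] at g1 g2
  have hfin := ((hT1.abs.add (g1.const_mul C)).add (g2.const_mul C)).const_mul ρ
  simp only [abs_zero, mul_zero, add_zero] at hfin
  refine squeeze_zero_norm' ?_ hfin
  filter_upwards [hs1, hs2] with N h1 h2
  have b1 := hb (s N) h1 h2 (L N)
  have b2 := hbρ (L N)
  have n1 := ff_nonneg P (s N) (L N)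
  have n2 := ff_nonneg P ρ (L N)
  set u := (1 - Real.exp (-(s N) * L N))/s N
  set v := (1 - Real.exp (-ρ * L N))/ρ
  have e : ff P (s N) (L N) - ff P ρ (L N) = -ρ * ((ff P ρ (L N) * u - ff P (s N) (L N) * v)
     - ff P ρ (L N) * (u - 1/ρ) + ff P (s N) (L N) * (v - 1/ρ)) := by field_simp; ring
  rw [Real.norm_eq_abs, e, abs_mul, abs_neg, abs_of_pos hρ]
  gcongr
  refine (abs_add_le _ _).trans (add_le_add ((abs_sub _ _).trans (add_le_add le_rfl ?_)) ?_)
  · rw [abs_mul, abs_of_nonneg n2]; gcongr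
  · rw [abs_mul, abs_of_nonneg n1]; gcongr

theorem lower (c : Ctx P ρ δ) : ∃ κ : ℝ, 0 < κ ∧ ∃ X, ∀ x ≥ X, κ ≤ ff P ρ x := by
  have hδ := c.hδ
  have h3 := c.h3
  have hρ : 0 < ρ := by linarith
  obtain ⟨C, hC, hb⟩ := c.bnd
  have hbρ := hb ρ (by linarith) (by linarith)
  by_contra! hcon
  have hch : ∀ k : ℕ, ∃ x, x ≥ (k:ℝ) ∧ ff P ρ x < 1/((k:ℝ)+1) := fun k =>
    hcon (1/((k:ℝ)+1)) (by positivity) k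
  choose x hx1 hx2 using hch
  have hx : Tendsto x atTop atTop := tendsto_atTop_mono hx1 tendsto_natCast_atTop_atTop
  have hf : Tendsto (fun k => ff P ρ (x k)) atTop (nhds 0) :=
    squeeze_zero (fun k => ff_nonneg _ _ _) (fun k => (hx2 k).le) tendsto_one_div_add_atTop_nhds_zero_nat
  have hPp := c.pos (ρ+δ) (by linarith)
  have h0 : Tendsto (fun k => ∑' n : P, pw P ρ n * ∫ y in (0:ℝ)..Real.log n, ff P ρ (x k - y)) atTop (nhds 0) := by
    refine c.dct _ (C/Pval P (ρ+δ)) ?_ ?_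
    · refine Eventually.of_forall fun N n => ?_
      have i2 := c.int_bd ρ (x N) C n hbρ
      have p2 := c.pw_le ρ (by linarith) (by linarith) n
      have p2' := pw_nonneg P ρ n
      rw [abs_mul, abs_of_nonneg p2']
      calc _ ≤ ((n:ℕ):ℝ)^(-(ρ-δ)) / Pval P (ρ+δ) * (C * Real.log n) := by gcongr
        _ = _ := by ring
    · intro n
      have hl := Real.log_nonneg (c.one_le n)
      have : Tendsto (fun k => pw P ρ n * (Real.exp (ρ * Real.log n) * ff P ρ (x k) * Real.log n)) atTop (nhds 0) := by
        have := ((hf.const_mul (Real.exp (ρ * Real.log n))).mul_const (Real.log n)).const_mul (pw P ρ n)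
        simpa using this
      refine squeeze_zero_norm (fun k => ?_) this
      rw [norm_mul, Real.norm_of_nonneg (pw_nonneg _ _ _)]
      refine mul_le_mul_of_nonneg_left ?_ (pw_nonneg _ _ _)
      have := intervalIntegral.norm_integral_le_of_norm_le_const (a := 0) (b := Real.log n)
        (f := fun y => ff P ρ (x k - y)) (C := Real.exp (ρ * Real.log n) * ff P ρ (x k)) ?_
      · rwa [sub_zero, abs_of_nonneg hl] at this
      · intro y hy
        rw [Set.uIoc_of_le hl] at hy
        rw [Real.norm_of_nonneg (ff_nonneg _ _ _)]
        refine (ff_mono P c.hP ρ (x k - y) (x k) (by linarith [hy.1])).trans ?_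
        have := ff_nonneg P ρ (x k)
        gcongr
        linarith [hy.2]
  have h1 := Hlim (fun _ => ρ) x hρ tendsto_const_nhds hx
  have h2 := h0.congr' (f₂ := fun N => (1 - Real.exp (-ρ * x N))/ρ) ?_
  · have := tendsto_nhds_unique h1 h2
    have : 0 < 1/ρ := by positivity
    linarith
  · filter_upwards [hx.eventually_ge_atTop 0] with N h4
    exact (H_hasSum P c.hP c.hne ρ (x N) (by linarith) (c.summ _ (by linarith)) h4).tsum_eq

theorem ratio1 (c : Ctx P ρ δ) (L : ℕ → ℝ) (hL : Tendsto L atTop atTop) (s : ℕ → ℝ)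
    (hs : Tendsto s atTop (nhds ρ)) :
    Tendsto (fun N => ff P (s N) (L N) / ff P ρ (L N)) atTop (nhds 1) := by
  obtain ⟨κ, hκ, X, hX⟩ := c.lower
  have h := (c.ratio L hL s hs).abs.mul_const (1/κ)
  rw [abs_zero, zero_mul] at h
  rw [← tendsto_sub_nhds_zero_iff]
  refine squeeze_zero_norm' ?_ h
  filter_upwards [hL.eventually_ge_atTop X] with N hN
  have h1 := hX _ hN
  have h2 : 0 < ff P ρ (L N) := by linarith
  have e : ff P (s N) (L N) / ff P ρ (L N) - 1 = (ff P (s N) (L N) - ff P ρ (L N)) * (1 / ff P ρ (L N)) := by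
    field_simp
  rw [e, norm_mul, Real.norm_eq_abs, Real.norm_of_nonneg (by positivity)]
  gcongr

end Ctx

namespace Ctx
variable {P : Set ℕ} {ρ δ : ℝ}

theorem logpow (c : Ctx P ρ δ) (j : ℕ) (hj : j ≠ 0) (n : P) :
    (Real.log n)^j ≤ (j/δ)^j * ((n:ℕ):ℝ)^δ := by
  have hδ := c.hδ
  have hn : (0:ℝ) < ((n:ℕ):ℝ) := lt_of_lt_of_le one_pos (c.one_le n)
  have hj' : (0:ℝ) < j := by exact_mod_cast Nat.pos_of_ne_zero hj
  have hl := Real.log_nonneg (c.one_le n)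
  have h1 := Real.log_le_rpow_div hn.le (div_pos hδ hj')
  calc (Real.log n)^j ≤ (((n:ℕ):ℝ)^(δ/j) / (δ/j))^j := by gcongr
    _ = (j/δ)^j * (((n:ℕ):ℝ)^(δ/j))^j := by rw [← mul_pow]; congr 1; field_simp
    _ = _ := by rw [← Real.rpow_natCast, ← Real.rpow_natCast, ← Real.rpow_mul hn.le]; congr 2; field_simp

theorem powsum (c : Ctx P ρ δ) (j : ℕ) (hj : j ≠ 0) :
    Summable (fun n : P => ((n:ℕ):ℝ)^(-ρ) * (Real.log n)^j) := by
  have hδ := c.hδ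
  have := (c.summ (ρ-δ) (by linarith)).mul_left ((j/δ)^j)
  refine Summable.of_nonneg_of_le (fun n => ?_) (fun n => ?_) this
  · have := Real.log_nonneg (c.one_le n)
    positivity
  · have hn : (0:ℝ) < ((n:ℕ):ℝ) := lt_of_lt_of_le one_pos (c.one_le n)
    rw [show -(ρ-δ) = -ρ + δ by ring, Real.rpow_add hn]
    have := c.logpow j hj n
    calc _ ≤ ((n:ℕ):ℝ)^(-ρ) * ((j/δ)^j * ((n:ℕ):ℝ)^δ) := by gcongr
      _ = _ := by ring

theorem hs1 (c : Ctx P ρ δ) : HasSum (fun n : P => ((n:ℕ):ℝ)^(-ρ) * (Real.log n)) (-Pderiv1 P ρ) := by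
  have := (c.powsum 1 one_ne_zero).hasSum
  simp only [pow_one] at this
  rw [Pderiv1, neg_neg]; exact this

theorem hs2 (c : Ctx P ρ δ) : HasSum (fun n : P => ((n:ℕ):ℝ)^(-ρ) * (Real.log n)^2) (Pderiv2 P ρ) :=
  (c.powsum 2 two_ne_zero).hasSum

theorem taylor (c : Ctx P ρ δ) : ∃ K : ℝ, 0 ≤ K ∧ ∀ τ : ℝ, |τ| ≤ δ →
    |Pval P (ρ+τ) - (Pval P ρ + τ * Pderiv1 P ρ + τ^2 * Pderiv2 P ρ / 2)| ≤ K * |τ|^3 := by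
  have hδ := c.hδ
  refine ⟨27/δ^3 * Pval P (ρ-2*δ), ?_, fun τ hτ => ?_⟩
  · have := (c.pos (ρ-2*δ) (by linarith)).le
    positivity
  have h1 := (c.summ (ρ+τ) (by linarith [neg_abs_le τ])).hasSum
  have h0 := (c.summ ρ (by linarith)).hasSum
  have hS := h1.sub ((h0.sub (c.hs1.mul_left τ)).add (c.hs2.mul_left (τ^2/2)))
  have hB := ((c.summ (ρ-2*δ) (by linarith)).hasSum).mul_left (27/δ^3 * |τ|^3)
  have key : ∀ n : P, ‖((n:ℕ):ℝ)^(-(ρ+τ)) - (((n:ℕ):ℝ)^(-ρ) - τ * (((n:ℕ):ℝ)^(-ρ) * Real.log n)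
      + τ^2/2 * (((n:ℕ):ℝ)^(-ρ) * (Real.log n)^2))‖ ≤ 27/δ^3 * |τ|^3 * ((n:ℕ):ℝ)^(-(ρ-2*δ)) := by
    intro n
    have hn : (0:ℝ) < ((n:ℕ):ℝ) := lt_of_lt_of_le one_pos (c.one_le n)
    have hl := Real.log_nonneg (c.one_le n)
    have e1 : ((n:ℕ):ℝ)^(-(ρ+τ)) = ((n:ℕ):ℝ)^(-ρ) * Real.exp (-τ * Real.log n) := by
      rw [neg_add, Real.rpow_add hn, Real.rpow_def_of_pos hn (-τ)]; ring_nf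
    have e2 : ((n:ℕ):ℝ)^(-(ρ-2*δ)) = ((n:ℕ):ℝ)^(-ρ) * (((n:ℕ):ℝ)^δ * ((n:ℕ):ℝ)^δ) := by
      rw [← Real.rpow_add hn, ← Real.rpow_add hn]; ring_nf
    have e3 : ((n:ℕ):ℝ)^(-(ρ+τ)) - (((n:ℕ):ℝ)^(-ρ) - τ * (((n:ℕ):ℝ)^(-ρ) * Real.log n)
      + τ^2/2 * (((n:ℕ):ℝ)^(-ρ) * (Real.log n)^2)) = ((n:ℕ):ℝ)^(-ρ) *
        (Real.exp (-τ * Real.log n) - ∑ i ∈ Finset.range 3, (-τ * Real.log n)^i / (Nat.factorial i : ℝ)) := by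
      rw [e1]; simp [Finset.sum_range_succ, Nat.factorial]; ring
    have r := exp_rem (-τ * Real.log n) 3
    have l3 := c.logpow 3 (by norm_num) n
    have ex : Real.exp |-τ * Real.log n| ≤ ((n:ℕ):ℝ)^δ := by
      rw [Real.rpow_def_of_pos hn, abs_mul, abs_neg, abs_of_nonneg hl]
      apply Real.exp_le_exp.2
      nlinarith
    rw [e3, norm_mul, Real.norm_of_nonneg (by positivity), Real.norm_eq_abs, e2]
    calc _ ≤ ((n:ℕ):ℝ)^(-ρ) * (|-τ * Real.log n|^3 * Real.exp |-τ * Real.log n|) := by gcongr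
      _ = ((n:ℕ):ℝ)^(-ρ) * (|τ|^3 * (Real.log n)^3 * Real.exp |-τ * Real.log n|) := by
          rw [abs_mul, abs_neg, abs_of_nonneg hl, mul_pow]
      _ ≤ ((n:ℕ):ℝ)^(-ρ) * (|τ|^3 * (((3:ℕ)/δ)^3 * ((n:ℕ):ℝ)^δ) * ((n:ℕ):ℝ)^δ) := by gcongr
      _ = _ := by push_cast; field_simp; ring
  have := hS.norm_le_of_bounded hB key
  rw [Real.norm_eq_abs] at this
  change |Pval P (ρ+τ) - (Pval P ρ - τ * -Pderiv1 P ρ + τ^2/2 * Pderiv2 P ρ)| ≤ 27/δ^3 * |τ|^3 * Pval P (ρ-2*δ) at this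
  convert this using 1
  · congr 1; ring
  · ring

theorem m1_pos (c : Ctx P ρ δ) : 0 < -Pderiv1 P ρ := by
  obtain ⟨n, hn⟩ := c.hne
  have h2 := c.hP n hn
  have hl : 0 < Real.log n := Real.log_pos (by exact_mod_cast (by omega : 1 < n))
  have hn0 : (0:ℝ) < n := by exact_mod_cast (by omega : 0 < n)
  refine lt_of_lt_of_le ?_ (le_hasSum c.hs1 ⟨n, hn⟩ fun k _ => ?_)
  · positivity
  · have := Real.log_nonneg (c.one_le k)
    positivity

theorem var_pos (c : Ctx P ρ δ) (hP2 : P.Nontrivial) (h1 : Pval P ρ = 1) :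
    0 < Pderiv2 P ρ - (Pderiv1 P ρ)^2 := by
  have hδ := c.hδ
  have h0 := (c.summ ρ (by linarith)).hasSum
  have h0' : HasSum (fun n : P => ((n : ℕ) : ℝ) ^ (-ρ)) 1 := by rw [← h1]; exact h0
  set m := -Pderiv1 P ρ with hm
  have hS := (c.hs2.sub (c.hs1.mul_left (2*m))).add (h0'.mul_left (m^2))
  have hS' : HasSum (fun n : P => ((n:ℕ):ℝ)^(-ρ) * (Real.log n - m)^2) (Pderiv2 P ρ - (Pderiv1 P ρ)^2) := by
    have e1 : (fun n : P => ((n:ℕ):ℝ)^(-ρ) * (Real.log n - m)^2) = fun n : P =>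
        ((n:ℕ):ℝ)^(-ρ) * (Real.log n)^2 - 2 * m * (((n:ℕ):ℝ)^(-ρ) * Real.log n) + m^2 * ((n:ℕ):ℝ)^(-ρ) := by
      funext n; ring
    have e2 : Pderiv2 P ρ - (Pderiv1 P ρ)^2 = Pderiv2 P ρ - 2 * m * m + m^2 * 1 := by
      rw [show Pderiv1 P ρ = -m by rw [hm]; ring]; ring
    rw [e1, e2]; exact hS
  obtain ⟨a, ha, b, hb, hab⟩ := hP2
  have : ∃ n : P, Real.log n ≠ m := by
    by_contra! hcon
    have e := (hcon ⟨a, ha⟩).trans (hcon ⟨b, hb⟩).symm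
    have a2 := c.hP a ha
    have b2 := c.hP b hb
    have := Real.log_injOn_pos (show (a:ℝ) ∈ Set.Ioi 0 by
        simp only [Set.mem_Ioi]; exact_mod_cast (by omega : 0 < a))
      (show (b:ℝ) ∈ Set.Ioi 0 by simp only [Set.mem_Ioi]; exact_mod_cast (by omega : 0 < b)) e
    exact hab (by exact_mod_cast this)
  obtain ⟨n, hn⟩ := this
  have hn0 : (0:ℝ) < ((n:ℕ):ℝ) := lt_of_lt_of_le one_pos (c.one_le n)
  refine lt_of_lt_of_le ?_ (le_hasSum hS' n fun k _ => by positivity)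
  have : Real.log n - m ≠ 0 := sub_ne_zero.2 hn
  positivity

theorem inv_exists (c : Ctx P ρ δ) (h1 : Pval P ρ = 1) (μ : ℝ) (hμ : μ = -1 / Pderiv1 P ρ) :
    ∃ η : ℝ, 0 < η ∧ η ≤ 1 ∧ ∀ u : ℝ, |u| ≤ η → ∃ τ : ℝ, |τ| ≤ 2*μ*|u| ∧ |τ| ≤ δ ∧
      Pval P (ρ+τ) = Real.exp (-u) := by
  have hδ := c.hδ
  obtain ⟨K, hK, hT⟩ := c.taylor
  have hm := c.m1_pos
  set m := -Pderiv1 P ρ with hmdef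
  have hd1 : Pderiv1 P ρ = -m := by rw [hmdef]; ring
  rw [hd1] at hT hμ
  have hμm : μ * m = 1 := by rw [hμ]; field_simp
  have hμ0 : 0 < μ := by rw [hμ, neg_div_neg_eq]; positivity
  set m2 := Pderiv2 P ρ with hm2
  have hm20 : 0 ≤ m2 := tsum_nonneg fun n => by positivity
  rw [h1] at hT
  set W := 4*μ^2*(m2/2 + K*δ) with hW
  have hW0 : 0 ≤ W := by positivity
  refine ⟨min (1/2) (min (δ/(2*μ)) (1/(2*(W+1)))), by positivity,
    (min_le_left _ _).trans (by norm_num), fun u hu => ?_⟩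
  have u1 := hu.trans (min_le_left _ _)
  have u2 := hu.trans ((min_le_right _ _).trans (min_le_left _ _))
  have u3 := hu.trans ((min_le_right _ _).trans (min_le_right _ _))
  rw [le_div_iff₀ (by positivity)] at u2 u3
  set v := |u| with hv
  have hv0 : 0 ≤ v := abs_nonneg u
  set r := 2*μ*v with hr
  have hr0 : 0 ≤ r := by positivity
  have hrδ : r ≤ δ := by rw [hr]; linarith
  have hWv : W * v^2 ≤ v/2 := by nlinarith
  have hrr : r^2*m2/2 + K*r^3 ≤ W * v^2 := by
    have : K * r^3 ≤ K * (r^2*δ) := by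
      rw [show r^3 = r^2*r by ring]; gcongr
    rw [hW]
    have e : r^2 = 4*μ^2*v^2 := by rw [hr]; ring
    rw [e] at this ⊢
    nlinarith
  have hrm : r * m = 2*v := by rw [hr]; linear_combination 2*v*hμm
  have t1 := hT r (by rwa [abs_of_nonneg hr0])
  have t2 := hT (-r) (by rwa [abs_neg, abs_of_nonneg hr0])
  rw [abs_neg] at t2
  rw [abs_of_nonneg hr0, abs_le] at t1 t2
  have f1 : Pval P (ρ+r) ≤ Real.exp (-u) := by
    have := Real.add_one_le_exp (-u)
    have := le_abs_self u
    nlinarith [t1.2]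
  have f2 : Real.exp (-u) ≤ Pval P (ρ+-r) := by
    have a1 : Real.exp (-u) ≤ Real.exp v := Real.exp_le_exp.2 (neg_le_abs u)
    have a2 := Real.abs_exp_sub_one_sub_id_le (x := v) (by rw [abs_of_nonneg hv0]; linarith)
    have a3 := (abs_le.1 a2).2
    have : 0 ≤ r^2*m2/2 := by positivity
    nlinarith [t2.1]
  have hcont : ContinuousOn (fun τ => Pval P (ρ+τ)) (Set.Icc (-r) r) := by
    refine c.Pval_cont.comp (by fun_prop) ?_
    intro τ hτ
    constructor <;> linarith [hτ.1, hτ.2]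
  obtain ⟨τ, hτ, hτe⟩ := intermediate_value_Icc' (by linarith : -r ≤ r) hcont ⟨f1, f2⟩
  exact ⟨τ, abs_le.2 hτ, (abs_le.2 hτ).trans hrδ, hτe⟩

theorem inv_taylor (c : Ctx P ρ δ) (h1 : Pval P ρ = 1) (μ σ : ℝ) (hμ : μ = -1 / Pderiv1 P ρ)
    (hσ : σ ^ 2 = μ ^ 3 * Pderiv2 P ρ - μ) :
    ∃ K : ℝ, ∀ u τ : ℝ, |u| ≤ 1 → |τ| ≤ 2*μ*|u| → |τ| ≤ δ → Pval P (ρ+τ) = Real.exp (-u) →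
      |τ - μ*u - σ^2*u^2/2| ≤ K * |u|^3 := by
  have hδ := c.hδ
  obtain ⟨K, hK, hT⟩ := c.taylor
  have hm := c.m1_pos
  set m := -Pderiv1 P ρ with hmdef
  have hd1 : Pderiv1 P ρ = -m := by rw [hmdef]; ring
  rw [hd1] at hT hμ
  have hμm : μ * m = 1 := by rw [hμ]; field_simp
  have hμ0 : 0 < μ := by rw [hμ, neg_div_neg_eq]; positivity
  set m2 := Pderiv2 P ρ with hm2
  have hm20 : 0 ≤ m2 := tsum_nonneg fun n => by positivity
  rw [h1] at hT
  set K1 := 3 + K*(2*μ)^3 with hK1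
  have hK10 : 0 ≤ K1 := by positivity
  set K2 := K1 + 1/2 + m2*(2*μ)^2/2 with hK2
  have hK20 : 0 ≤ K2 := by positivity
  refine ⟨μ * (K1 + 3*K2/2 + |m2-m^2| * (3*μ^2*K2)/2), fun u τ hu hτu hτ he => ?_⟩
  have t := hT τ hτ
  rw [he] at t
  set v := |u| with hv
  have hv0 : 0 ≤ v := abs_nonneg u
  have r := exp_rem (-u) 3
  have hs : ∑ i ∈ Finset.range 3, (-u)^i / (Nat.factorial i : ℝ) = 1 - u + u^2/2 := by
    simp [Finset.sum_range_succ, Nat.factorial]; ring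
  rw [hs, abs_neg, ← hv] at r
  have hev : Real.exp v ≤ 3 := by
    have : Real.exp v ≤ Real.exp 1 := Real.exp_le_exp.2 hu
    linarith [Real.exp_one_lt_d9]
  have r' : |Real.exp (-u) - (1 - u + u^2/2)| ≤ v^3 * 3 := r.trans (by gcongr)
  have hτ3 : K * |τ|^3 ≤ K * (2*μ)^3 * v^3 := by
    rw [mul_assoc, ← mul_pow]; gcongr
  have hτ2 : τ^2 ≤ (2*μ)^2*v^2 := by
    rw [← mul_pow, ← sq_abs τ]; gcongr
  have huv : u^2 = v^2 := (sq_abs u).symm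
  have A : |u - u^2/2 - m*τ + m2*τ^2/2| ≤ K1 * v^3 := by
    rw [abs_le] at t r' ⊢
    rw [hK1]
    constructor <;> linarith [t.1, t.2, r'.1, r'.2]
  have hv3 : v^3 ≤ v^2 := by
    have : v^3 = v^2 * v := by ring
    rw [this]; nlinarith [sq_nonneg v]
  have B : |u - m*τ| ≤ K2 * v^2 := by
    have q1 : K1 * v^3 ≤ K1 * v^2 := by gcongr
    have q2 : m2 * τ^2 ≤ m2 * ((2*μ)^2*v^2) := by gcongr
    have q3 : 0 ≤ m2*τ^2 := by positivity
    have q4 := sq_nonneg v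
    rw [abs_le] at A ⊢
    have q5 : K2 * v^2 = K1*v^2 + v^2/2 + m2*((2*μ)^2*v^2)/2 := by rw [hK2]; ring
    have q6 : 0 ≤ K1*v^2 := by positivity
    rw [q5]
    rw [huv] at A
    obtain ⟨A1, A2⟩ := A
    clear_value K1 K2 v
    constructor
    · linarith only [A1, A2, q1, q2, q3, q4, q6]
    · linarith only [A1, A2, q1, q2, q3, q4, q6]
  have B2 : |u + m*τ| ≤ 3 * v := by
    refine (abs_add_le _ _).trans ?_
    rw [abs_mul, abs_of_pos hm]
    have : m * |τ| ≤ m * (2*μ*v) := by gcongr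
    have e : m * (2*μ*v) = 2*v := by linear_combination 2*v*hμm
    linarith
  have D : |u^2 - m^2*τ^2| ≤ 3*K2*v^3 := by
    rw [show u^2 - m^2*τ^2 = (u - m*τ)*(u+m*τ) by ring, abs_mul]
    calc _ ≤ (K2*v^2)*(3*v) := by gcongr
      _ = _ := by ring
  have E : |τ^2 - μ^2*u^2| ≤ 3*μ^2*K2*v^3 := by
    have : τ^2 - μ^2*u^2 = -(μ^2*(u^2 - m^2*τ^2)) := by
      linear_combination (-(1+μ*m)*τ^2) * hμm
    rw [this, abs_neg, abs_mul, abs_of_nonneg (by positivity)]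
    calc _ ≤ μ^2 * (3*K2*v^3) := by gcongr
      _ = _ := by ring
  have hσ' : σ^2 = μ^3*(m2 - m^2) := by
    rw [hσ]; linear_combination μ*(1+μ*m)*hμm
  have F : τ - μ*u - σ^2*u^2/2 = -μ * ((u - u^2/2 - m*τ + m2*τ^2/2) + (u^2 - m^2*τ^2)/2
      - (m2-m^2)*(τ^2 - μ^2*u^2)/2) := by
    rw [hσ']; linear_combination (-τ) * hμm
  rw [F, abs_mul, abs_neg, abs_of_pos hμ0, mul_assoc μ]
  gcongr
  refine (abs_sub _ _).trans ?_
  refine (add_le_add (abs_add_le _ _) le_rfl).trans ?_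
  rw [abs_div, abs_div, abs_mul, abs_two]
  calc _ ≤ K1*v^3 + 3*K2*v^3/2 + |m2-m^2| * (3*μ^2*K2*v^3)/2 := by gcongr
    _ = _ := by ring

end Ctx

theorem Acum_eq (P : Set ℕ) (hP : ∀ n ∈ P, 2 ≤ n) (N : ℕ) (g : ℕ → ℝ) :
    ∑ n ∈ Finset.Icc 1 N, ∑' m : ℕ, (af P m n : ℝ) * g m =
      ∑ m ∈ Finset.range (N+1), cnt P m N * g m := by
  have : ∀ n ∈ Finset.Icc 1 N, ∑' m : ℕ, (af P m n : ℝ) * g m =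
      ∑ m ∈ Finset.range (N+1), (af P m n : ℝ) * g m := by
    intro n hn
    refine tsum_eq_sum fun m hm => ?_
    have h1 := (Finset.mem_Icc.1 hn).2
    rw [Finset.mem_range, not_lt] at hm
    have := Nat.lt_two_pow_self (n := m)
    rw [af_eq_zero P hP m n (by omega)]; simp
  rw [Finset.sum_congr rfl this, Finset.sum_comm]
  refine Finset.sum_congr rfl fun m _ => ?_
  rw [cnt, Finset.sum_mul]

theorem Acum_Fz (P : Set ℕ) (hP : ∀ n ∈ P, 2 ≤ n) (N : ℕ) : Acum P N = Fz P 1 N := by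
  have := Acum_eq P hP N (fun _ => 1)
  simp only [mul_one] at this
  unfold Acum aTot Fz
  simpa using this

theorem Fz_ff (P : Set ℕ) (s : ℝ) (N : ℕ) (hN : 1 ≤ N) :
    Fz P (Pval P s)⁻¹ N = Real.exp (s * Real.log N) * ff P s (Real.log N) := by
  have hN0 : (0:ℝ) < N := by exact_mod_cast hN
  unfold ff
  rw [Real.exp_log hN0, Nat.floor_natCast, ← mul_assoc, ← Real.exp_add]
  simp

namespace Ctx
variable {P : Set ℕ} {ρ δ : ℝ}

theorem mgf (c : Ctx P ρ δ) (hP2 : P.Nontrivial) (h1 : Pval P ρ = 1) (μ σ : ℝ)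
    (hμ : μ = -1 / Pderiv1 P ρ) (hσ0 : 0 ≤ σ) (hσ : σ ^ 2 = μ ^ 3 * Pderiv2 P ρ - μ) (t : ℝ) :
    Tendsto (fun N : ℕ => (∑ m ∈ Finset.range (N+1), cnt P m N *
      Real.exp (t * (((m : ℝ) - μ * Real.log N) / (σ * Real.sqrt (Real.log N))))) / Acum P N)
      atTop (nhds (Real.exp (t^2/2))) := by
  have hδ := c.hδ
  have hm := c.m1_pos
  have hvar := c.var_pos hP2 h1
  have hμ0 : 0 < μ := by rw [hμ, ← neg_div_neg_eq, neg_neg]; positivity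
  have hμm : μ * Pderiv1 P ρ = -1 := by rw [hμ]; field_simp [show Pderiv1 P ρ ≠ 0 by linarith]
  have hσp : 0 < σ := by
    rcases hσ0.lt_or_eq with h | h
    · exact h
    · exfalso
      rw [← h] at hσ
      have : μ ^ 3 * Pderiv2 P ρ - μ = μ^3 * (Pderiv2 P ρ - (Pderiv1 P ρ)^2) := by
        linear_combination μ*(-1 + μ * Pderiv1 P ρ)*hμm
      have h5 : 0 < μ^3 * (Pderiv2 P ρ - (Pderiv1 P ρ)^2) := by positivity
      rw [← this, ← hσ] at h5
      norm_num at h5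
  obtain ⟨η, hη, hη1, hex⟩ := c.inv_exists h1 μ hμ
  obtain ⟨K, hK⟩ := c.inv_taylor h1 μ σ hμ hσ
  set L : ℕ → ℝ := fun N => Real.log N with hL
  have hLt : Tendsto L atTop atTop := Real.tendsto_log_atTop.comp tendsto_natCast_atTop_atTop
  set u : ℕ → ℝ := fun N => t / (σ * Real.sqrt (L N)) with hu
  have hut : Tendsto u atTop (nhds 0) := by
    refine Tendsto.const_div_atTop ?_ t
    exact (Real.tendsto_sqrt_atTop.comp hLt).const_mul_atTop hσp
  have huη : ∀ᶠ N in atTop, |u N| ≤ η := by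
    have := hut.abs
    rw [abs_zero] at this
    exact this.eventually (Iic_mem_nhds hη)
  have hτ : ∀ N, ∃ τ : ℝ, |τ| ≤ 2*μ*|u N| ∧ (|u N| ≤ η → |τ| ≤ δ ∧ Pval P (ρ+τ) = Real.exp (-(u N))) := by
    intro N
    by_cases h : |u N| ≤ η
    · obtain ⟨τ, a, b⟩ := hex (u N) h
      exact ⟨τ, a, fun _ => b⟩
    · exact ⟨0, by rw [abs_zero]; positivity, fun h' => absurd h' h⟩
  choose τ hτ1 hτ2 using hτ
  have hτ0 : Tendsto τ atTop (nhds 0) := by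
    refine squeeze_zero_norm hτ1 ?_
    have := hut.abs.const_mul (2*μ)
    simpa using this
  have hs : Tendsto (fun N => ρ + τ N) atTop (nhds ρ) := by
    have := hτ0.const_add ρ
    rwa [add_zero] at this
  have hr := c.ratio1 L hLt _ hs
  have hexp : Tendsto (fun N => (τ N - μ * u N) * L N) atTop (nhds (t^2/2)) := by
    rw [← tendsto_sub_nhds_zero_iff]
    have hb : Tendsto (fun N => K * (t^2/σ^2) * |u N|) atTop (nhds 0) := by
      have := hut.abs.const_mul (K * (t^2/σ^2))
      simpa using this
    refine squeeze_zero_norm' ?_ hb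
    filter_upwards [huη, hLt.eventually_gt_atTop 0] with N h2 h4
    obtain ⟨h5, h6⟩ := hτ2 N h2
    have h7 := hK (u N) (τ N) (h2.trans hη1) (hτ1 N) h5 h6
    have hu2 : u N^2 * L N = t^2/σ^2 := by
      simp only [hu]
      rw [div_pow, mul_pow, Real.sq_sqrt h4.le]; field_simp
    have e : (τ N - μ * u N) * L N - t^2/2 = (τ N - μ * u N - σ^2 * u N^2/2) * L N := by
      have : σ^2 * (u N^2 * L N) = t^2 := by rw [hu2]; field_simp
      linear_combination this/2
    rw [e, norm_mul, Real.norm_eq_abs, Real.norm_of_nonneg h4.le]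
    calc _ ≤ K * |u N|^3 * L N := by gcongr
      _ = K * (u N^2 * L N) * |u N| := by rw [← sq_abs (u N)]; ring
      _ = _ := by rw [hu2]
  have hfin := ((Real.continuous_exp.tendsto _).comp hexp).mul hr
  rw [mul_one] at hfin
  refine hfin.congr' ?_
  filter_upwards [huη, eventually_ge_atTop 1] with N h2 h4
  obtain ⟨h5, h6⟩ := hτ2 N h2
  have hF := Fz_ff P (ρ + τ N) N h4
  have hF1 := Fz_ff P ρ N h4
  rw [h6, ← Real.exp_neg, neg_neg] at hF
  rw [h1, inv_one] at hF1
  have hsum : ∑ m ∈ Finset.range (N+1), cnt P m N *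
      Real.exp (t * (((m : ℝ) - μ * Real.log N) / (σ * Real.sqrt (Real.log N)))) =
      Real.exp (-(μ * u N * L N)) * Fz P (Real.exp (u N)) N := by
    rw [Fz, Finset.mul_sum]
    refine Finset.sum_congr rfl fun m _ => ?_
    have : t * (((m : ℝ) - μ * Real.log N) / (σ * Real.sqrt (Real.log N))) =
        -(μ * u N * L N) + m * u N := by simp only [hu, hL]; ring
    rw [this, Real.exp_add, Real.exp_nat_mul]; ring
  rw [hsum, Acum_Fz P c.hP, hF1, hF]
  have e : Real.exp ((ρ + τ N) * Real.log N) = Real.exp (ρ * L N) * Real.exp (τ N * L N) := by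
    rw [← Real.exp_add, ← add_mul]
  have e2 : Real.exp ((τ N - μ * u N) * L N) = Real.exp (-(μ * u N * L N)) * Real.exp (τ N * L N) := by
    rw [← Real.exp_add]; ring_nf
  rw [e]
  simp only [Function.comp, e2]
  have : Real.exp (ρ * L N) ≠ 0 := (Real.exp_pos _).ne'
  change _ * (ff P (ρ + τ N) (L N) / ff P ρ (L N)) = _ * (_ * _ * ff P (ρ + τ N) (L N)) / (Real.exp (ρ * L N) * ff P ρ (L N))
  rw [mul_div_assoc, mul_assoc (Real.exp (ρ * L N)), mul_div_mul_left _ _ this]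
  ring

end Ctx

theorem ctx_exists (P : Set ℕ) (hP : ∀ n ∈ P, 2 ≤ n) (hne : P.Nonempty) (ρ : ℝ) (hρ0 : 0 < ρ)
    (hρκ : kappa P < (ρ : EReal)) : ∃ δ, Ctx P ρ δ := by
  unfold kappa at hρκ
  rw [sInf_lt_iff] at hρκ
  obtain ⟨_, ⟨r, rfl, hr⟩, hlt⟩ := hρκ
  have hlt' : r < ρ := by exact_mod_cast hlt
  have a1 := min_le_left ((ρ-r)/3) (ρ/4)
  have a2 := min_le_right ((ρ-r)/3) (ρ/4)
  refine ⟨min ((ρ-r)/3) (ρ/4), hP, hne, lt_min (by linarith) (by linarith), by linarith, ?_⟩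
  refine Summable.of_nonneg_of_le (fun n => by positivity) (fun n => ?_) hr
  refine Real.rpow_le_rpow_of_exponent_le ?_ (by linarith)
  have := hP n n.2
  exact_mod_cast (by omega : 1 ≤ (n:ℕ))


/-- **Convergence of all normalized central moments.** For every integer `k ≥ 0`, the
`k`-th normalized central moment of `Y_N` converges to the `k`-th moment of the standard
normal distribution: `k!/((k/2)! 2^{k/2})` for even `k` and `0` for odd `k`. -/
theorem ordered_factorizations_central_moments
    (P : Set ℕ) (hP : ∀ n ∈ P, 2 ≤ n) (hP2 : P.Nontrivial)
    (hκ : 1 < PvalE P (kappa P))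
    (ρ : ℝ) (hρ0 : 0 < ρ) (hρκ : kappa P < (ρ : EReal)) (hρ1 : Pval P ρ = 1)
    (μ σ : ℝ) (hμ : μ = -1 / Pderiv1 P ρ)
    (hσ0 : 0 ≤ σ) (hσ : σ ^ 2 = μ ^ 3 * Pderiv2 P ρ - μ)
    (k : ℕ) :
    Tendsto (fun N : ℕ =>
        (∑ n ∈ Finset.Icc 1 N, ∑' m : ℕ, (af P m n : ℝ) *
            (((m : ℝ) - μ * Real.log N) / (σ * Real.sqrt (Real.log N))) ^ k) / Acum P N)
      atTop
      (nhds (if Even k then (Nat.factorial k : ℝ) / (Nat.factorial (k / 2) * 2 ^ (k / 2))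
        else 0)) := by
  obtain ⟨δ, c⟩ := ctx_exists P hP hP2.nonempty ρ hρ0 hρκ
  have h := moments_of_mgf (fun N m => cnt P m N)
    (fun N m => ((m : ℝ) - μ * Real.log N) / (σ * Real.sqrt (Real.log N)))
    (fun N => Finset.range (N+1)) (fun N m _ => cnt_nonneg P m N) (fun N => Acum P N)
    (fun N => by
      show 0 ≤ Acum P N
      rw [Acum_Fz P hP]; exact Fz_nonneg P 1 zero_le_one N)
    (fun t => c.mgf hP2 hρ1 μ σ hμ hσ0 hσ t) k
  refine h.congr fun N => ?_
  rw [Acum_eq P hP N]
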